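/- Let f:[a,b]→ℝ be measurable and F:[a,b]→ℝ continuous with F(a)=0. Then the following are equivalent: (i) f ∈ Den[a,b] and F(x)=∫_a^x f; (ii) there is a countable ordinal α with f ∈ Den_α[a,b] and F(x)=∫_a^x f; (iii) there is a countable ordinal α with D_{f,F}^{α+1}([a,b]) = ∅ and F′ = f a.e.; (iv) there is a countable ordinal α with D_F^{α+1}([a,b]) = ∅ and F′ = f a.e. -/

import Mathlib

open MeasureTheory Set Filter

noncomputable section

attribute [local instance] Classical.propDecidable

/-- The oscillation `ω(F, J)` of `F` on the set `J`. -/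
def osc (F : ℝ → ℝ) (J : Set ℝ) : ℝ :=
  sSup {d : ℝ | ∃ x ∈ J, ∃ y ∈ J, d = |F x - F y|}

/-- `D` is a `K`-edged pre-partition of `[a,b]`: a finite nonempty collection of
pairwise non-overlapping closed subintervals of `[a,b]` whose endpoints lie in `K`. -/
def IsPrePartition (a b : ℝ) (K : Set ℝ) (D : Finset (ℝ × ℝ)) : Prop :=
  D.Nonempty ∧
  (∀ p ∈ D, p.1 ≤ p.2 ∧ p.1 ∈ K ∧ p.2 ∈ K ∧ Icc p.1 p.2 ⊆ Icc a b) ∧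
  (D : Set (ℝ × ℝ)).Pairwise fun p q => p.2 ≤ q.1 ∨ q.2 ≤ p.1

/-- `F ∈ AC_*(K)`: absolute continuity in the restricted sense on `K`. -/
def ACStar (a b : ℝ) (F : ℝ → ℝ) (K : Set ℝ) : Prop :=
  ∀ ε > (0:ℝ), ∃ δ > (0:ℝ), ∀ D : Finset (ℝ × ℝ), IsPrePartition a b K D →
    (∑ p ∈ D, (p.2 - p.1)) < δ → (∑ p ∈ D, osc F (Icc p.1 p.2)) < ε

/-- `F ∈ ACG_*(K)`: `K` is a countable union of closed sets `Kₙ ⊆ [a,b]` with `F ∈ AC_*(Kₙ)`. -/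
def ACGStar (a b : ℝ) (F : ℝ → ℝ) (K : Set ℝ) : Prop :=
  ∃ C : ℕ → Set ℝ, (∀ n, IsClosed (C n) ∧ C n ⊆ Icc a b ∧ ACStar a b F (C n)) ∧
    K = ⋃ n, C n

/-- `F` is the indefinite Denjoy integral of `f` on `[a,b]`:
`F` is continuous on `[a,b]`, `F(a) = 0`, `F ∈ ACG_*([a,b])`, and `F' = f` a.e. on `[a,b]`. -/
def HasDenjoyIntegralFn (a b : ℝ) (f F : ℝ → ℝ) : Prop :=
  ContinuousOn F (Icc a b) ∧ F a = 0 ∧ ACGStar a b F (Icc a b) ∧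
    ∀ᵐ x ∂(volume.restrict (Icc a b)), HasDerivAt F (f x) x

/-- `f ∈ Den[a,b]`: `f` is Denjoy integrable on `[a,b]`. -/
def DenjoyIntegrable (a b : ℝ) (f : ℝ → ℝ) : Prop :=
  ∃ F : ℝ → ℝ, HasDenjoyIntegralFn a b f F

/-- The Denjoy integral `∫_a^b f` (junk value `0` if `f` is not Denjoy integrable). -/
def denjoyIntegral (a b : ℝ) (f : ℝ → ℝ) : ℝ :=
  if h : DenjoyIntegrable a b f then Classical.choose h b else 0

/-- The derivative `D_f(K)`: points of `K` at which `f` is not locally Lebesgue integrable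
relative to `K`. -/
def Df (f : ℝ → ℝ) (K : Set ℝ) : Set ℝ :=
  {x ∈ K | ∀ c d : ℝ, c < x → x < d → ¬ IntegrableOn f (Icc c d ∩ K) volume}

/-- The derivative `D_F(K)`: points of `K` at which `F` is not locally `AC_*` relative to `K`. -/
def DF (a b : ℝ) (F : ℝ → ℝ) (K : Set ℝ) : Set ℝ :=
  {x ∈ K | ∀ c d : ℝ, c < x → x < d → ¬ ACStar a b F (Icc c d ∩ K)}

/-- The derivative `D_{f,F}(K) = D_f(K) ∪ D_F(K)`. -/
def DfF (a b : ℝ) (f F : ℝ → ℝ) (K : Set ℝ) : Set ℝ := Df f K ∪ DF a b F K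

/-- Transfinite iterates of a derivative operation on sets:
`D⁰(K) = K`, `D^(α+1)(K) = D(D^α(K))`, and `D^α(K) = ⋂_(β<α) D^β(K)` for limit `α`. -/
def derivIter (D : Set ℝ → Set ℝ) (K : Set ℝ) (α : Ordinal.{0}) : Set ℝ :=
  Ordinal.limitRecOn α K (fun _ ih => D ih) (fun o _ ih => ⋂ β : Iio o, ih β.1 β.2)

/-- `D^∞(K) = ⋂_(α<ω₁) D^α(K)`. -/
def derivInfty (D : Set ℝ → Set ℝ) (K : Set ℝ) : Set ℝ :=
  ⋂ (α : Ordinal.{0}) (_ : α.card ≤ Cardinal.aleph0), derivIter D K α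

/-- `Lim(X)`: the improper integrals of `X`. -/
def LimSet (a b : ℝ) (X : Set (ℝ → ℝ)) : Set (ℝ → ℝ) :=
  {f | ∃ A B : ℕ → ℝ,
    (∀ n, a ≤ A n ∧ B n ≤ b ∧ A (n+1) ≤ A n ∧ B n ≤ B (n+1)) ∧
    (⋃ n, Ioo (A n) (B n)) = Ioo a b ∧
    (∀ n, A n < B n → (Ioo (A n) (B n)).indicator f ∈ X) ∧
    (∃ L, Tendsto (fun c => denjoyIntegral c (B 0) f) (nhdsWithin a (Ioi a)) (nhds L)) ∧
    (∃ L, Tendsto (fun c => denjoyIntegral (A 0) c f) (nhdsWithin b (Iio b)) (nhds L))}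

/-- `Step(X)`: the functions given by the Step Lemma from `X`. -/
def StepSet (a b : ℝ) (X : Set (ℝ → ℝ)) : Set (ℝ → ℝ) :=
  {f | ∃ K : Set ℝ, IsClosed K ∧ K ⊆ Icc a b ∧
    ∃ c d : ℕ → ℝ, (∀ n, c n ≤ d n) ∧
      (Pairwise fun m n => Disjoint (Ioo (c m) (d m)) (Ioo (c n) (d n))) ∧
      (⋃ n, Ioo (c n) (d n)) = Ioo a b \ K ∧
      IntegrableOn f K volume ∧
      (∀ n, c n < d n → (Ioo (c n) (d n)).indicator f ∈ X) ∧
      ∃ F : ℝ → ℝ, HasDenjoyIntegralFn a b f F ∧ ACStar a b F K}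

/-- The hierarchy `Den_α[a,b]`: `Den₀ = L¹[a,b]` and
`Den_α = Step(Lim(⋃_(β<α) Den_β))` for `α > 0`. -/
def DenLevel (a b : ℝ) : Ordinal.{0} → Set (ℝ → ℝ) :=
  Ordinal.lt_wf.fix fun α ih =>
    if α = 0 then {f | IntegrableOn f (Icc a b) volume}
    else StepSet a b (LimSet a b (⋃ β : Iio α, ih β.1 β.2))


theorem osc_le {F : ℝ → ℝ} {J : Set ℝ} {M : ℝ} (hM : 0 ≤ M)
    (h : ∀ x ∈ J, ∀ y ∈ J, |F x - F y| ≤ M) : osc F J ≤ M := by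
  apply Real.sSup_le _ hM
  rintro d ⟨x, hx, y, hy, rfl⟩
  exact h x hx y hy

theorem osc_nonneg (F : ℝ → ℝ) (J : Set ℝ) : 0 ≤ osc F J := by
  apply Real.sSup_nonneg
  rintro d ⟨x, hx, y, hy, rfl⟩
  exact abs_nonneg _

theorem le_osc {F : ℝ → ℝ} {a b u v : ℝ} (hF : ContinuousOn F (Icc a b))
    (h : Icc u v ⊆ Icc a b) {x y : ℝ} (hx : x ∈ Icc u v) (hy : y ∈ Icc u v) :
    |F x - F y| ≤ osc F (Icc u v) := by
  obtain ⟨M, hM⟩ := isCompact_Icc.exists_bound_of_continuousOn hF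
  apply le_csSup
  · refine ⟨M + M, ?_⟩
    rintro d ⟨x, hx, y, hy, rfl⟩
    have h1 := hM x (h hx)
    have h2 := hM y (h hy)
    simp only [Real.norm_eq_abs] at h1 h2
    exact (abs_sub _ _).trans (add_le_add h1 h2)
  · exact ⟨x, hx, y, hy, rfl⟩

theorem osc_congr {F G : ℝ → ℝ} {J : Set ℝ}
    (h : ∀ x ∈ J, ∀ y ∈ J, F x - F y = G x - G y) : osc F J = osc G J := by
  unfold osc
  congr 1
  ext d
  constructor
  · rintro ⟨x, hx, y, hy, rfl⟩
    exact ⟨x, hx, y, hy, by rw [h x hx y hy]⟩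
  · rintro ⟨x, hx, y, hy, rfl⟩
    exact ⟨x, hx, y, hy, by rw [h x hx y hy]⟩

theorem osc_self (F : ℝ → ℝ) (x : ℝ) : osc F (Icc x x) = 0 := by
  apply le_antisymm _ (osc_nonneg _ _)
  apply osc_le le_rfl
  intro y hy z hz
  simp only [Icc_self, mem_singleton_iff] at hy hz
  simp [hy, hz]

theorem osc_mono {F : ℝ → ℝ} {a b u v u' v' : ℝ} (hF : ContinuousOn F (Icc a b))
    (h : Icc u v ⊆ Icc a b) (h' : Icc u' v' ⊆ Icc u v) :
    osc F (Icc u' v') ≤ osc F (Icc u v) :=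
  osc_le (osc_nonneg _ _) fun _ hx _ hy => le_osc hF h (h' hx) (h' hy)

theorem ACStar.transfer {a b a' b' : ℝ} {F G : ℝ → ℝ} {K L : Set ℝ} (hKL : K ⊆ L)
    (h : ∀ u ∈ K, ∀ v ∈ K, u ≤ v → Icc u v ⊆ Icc a' b' →
      Icc u v ⊆ Icc a b ∧ osc G (Icc u v) ≤ osc F (Icc u v))
    (hF : ACStar a b F L) : ACStar a' b' G K := by
  intro ε hε
  obtain ⟨δ, hδ, H⟩ := hF ε hε
  refine ⟨δ, hδ, fun D hD hs => ?_⟩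
  obtain ⟨h1, h2, h3⟩ := hD
  refine lt_of_le_of_lt (Finset.sum_le_sum fun p hp => ?_) (H D ⟨h1, fun p hp => ?_, h3⟩ hs)
  · obtain ⟨q1, q2, q3, q4⟩ := h2 p hp
    exact (h _ q2 _ q3 q1 q4).2
  · obtain ⟨q1, q2, q3, q4⟩ := h2 p hp
    exact ⟨q1, hKL q2, hKL q3, (h _ q2 _ q3 q1 q4).1⟩

theorem ACStar.mono {a b : ℝ} {F : ℝ → ℝ} {K L : Set ℝ} (hKL : K ⊆ L)
    (hF : ACStar a b F L) : ACStar a b F K :=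
  hF.transfer hKL fun _ _ _ _ _ h => ⟨h, le_rfl⟩

theorem ACStar.of_const {a b : ℝ} {F : ℝ → ℝ} {K : Set ℝ}
    (h : ∀ u ∈ K, ∀ v ∈ K, u ≤ v → osc F (Icc u v) = 0) : ACStar a b F K := by
  intro ε hε
  refine ⟨1, one_pos, fun D hD _ => ?_⟩
  rw [Finset.sum_eq_zero]
  · exact hε
  · intro p hp
    obtain ⟨q1, q2, q3, q4⟩ := hD.2.1 p hp
    exact h _ q2 _ q3 q1

theorem ACStar.sub {a b : ℝ} {F G : ℝ → ℝ} {K : Set ℝ} (hFc : ContinuousOn F (Icc a b))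
    (hGc : ContinuousOn G (Icc a b)) (hF : ACStar a b F K) (hG : ACStar a b G K) :
    ACStar a b (fun x => F x - G x) K := by
  intro ε hε
  obtain ⟨δ, hδ, H⟩ := hF (ε / 2) (half_pos hε)
  obtain ⟨δ', hδ', H'⟩ := hG (ε / 2) (half_pos hε)
  refine ⟨min δ δ', lt_min hδ hδ', fun D hD hs => ?_⟩
  have e1 := H D hD (hs.trans_le (min_le_left _ _))
  have e2 := H' D hD (hs.trans_le (min_le_right _ _))
  have : ∑ p ∈ D, osc (fun x => F x - G x) (Icc p.1 p.2) ≤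
      ∑ p ∈ D, osc F (Icc p.1 p.2) + ∑ p ∈ D, osc G (Icc p.1 p.2) := by
    rw [← Finset.sum_add_distrib]
    refine Finset.sum_le_sum fun p hp => ?_
    obtain ⟨q1, q2, q3, q4⟩ := hD.2.1 p hp
    refine osc_le (add_nonneg (osc_nonneg _ _) (osc_nonneg _ _)) fun x hx y hy => ?_
    have i1 := le_osc hFc q4 hx hy
    have i2 := le_osc hGc q4 hx hy
    calc |F x - G x - (F y - G y)| = |(F x - F y) - (G x - G y)| := by congr 1; ring
      _ ≤ _ := (abs_sub _ _).trans (add_le_add i1 i2)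
  linarith

/-- uniform continuity in terms of the oscillation -/
theorem exists_osc_lt {a b : ℝ} {F : ℝ → ℝ} (hFc : ContinuousOn F (Icc a b)) {ε : ℝ}
    (hε : 0 < ε) : ∃ δ > (0:ℝ), ∀ u v, u ≤ v → Icc u v ⊆ Icc a b → v - u < δ →
      osc F (Icc u v) ≤ ε := by
  have hu := isCompact_Icc.uniformContinuousOn_of_continuous hFc
  rw [Metric.uniformContinuousOn_iff] at hu
  obtain ⟨δ, hδ, H⟩ := hu ε hε
  refine ⟨δ, hδ, fun u v huv hs hl => osc_le hε.le fun x hx y hy => ?_⟩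
  have := H x (hs hx) y (hs hy) (by
    rw [Real.dist_eq, abs_lt]
    constructor <;> linarith [hx.1, hx.2, hy.1, hy.2])
  rw [Real.dist_eq] at this
  exact this.le

/-- drop the degenerate members and allow empty families -/
theorem ACStar.iff' {a b : ℝ} {F : ℝ → ℝ} {K : Set ℝ} :
    ACStar a b F K ↔ ∀ ε > (0:ℝ), ∃ δ > (0:ℝ), ∀ D : Finset (ℝ × ℝ),
      (∀ p ∈ D, p.1 < p.2 ∧ p.1 ∈ K ∧ p.2 ∈ K ∧ Icc p.1 p.2 ⊆ Icc a b) →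
      ((D : Set (ℝ × ℝ)).Pairwise fun p q => p.2 ≤ q.1 ∨ q.2 ≤ p.1) →
      (∑ p ∈ D, (p.2 - p.1)) < δ → (∑ p ∈ D, osc F (Icc p.1 p.2)) ≤ ε := by
  constructor
  · intro h ε hε
    obtain ⟨δ, hδ, H⟩ := h ε hε
    refine ⟨δ, hδ, fun D h1 h2 h3 => ?_⟩
    rcases D.eq_empty_or_nonempty with rfl | hne
    · simpa using hε.le
    · exact (H D ⟨hne, fun p hp => ⟨(h1 p hp).1.le, (h1 p hp).2⟩, h2⟩ h3).le
  · intro h ε hε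
    obtain ⟨δ, hδ, H⟩ := h (ε / 2) (half_pos hε)
    refine ⟨δ, hδ, fun D hD hs => ?_⟩
    have e1 : ∑ p ∈ D with p.1 < p.2, osc F (Icc p.1 p.2) = ∑ p ∈ D, osc F (Icc p.1 p.2) := by
      apply Finset.sum_filter_of_ne
      intro p hp hne
      rcases (hD.2.1 p hp).1.eq_or_lt with h | h
      · exact absurd (by rw [h]; exact osc_self _ _) hne
      · exact h
    have e2 : ∑ p ∈ D with p.1 < p.2, (p.2 - p.1) ≤ ∑ p ∈ D, (p.2 - p.1) := by
      apply Finset.sum_le_sum_of_subset_of_nonneg (Finset.filter_subset _ _)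
      intro p hp _
      linarith [(hD.2.1 p hp).1]
    have := H (D.filter fun p => p.1 < p.2) (fun p hp => by
      rw [Finset.mem_filter] at hp
      exact ⟨hp.2, (hD.2.1 p hp.1).2⟩) (fun p hp q hq hpq => by
        simp only [Finset.coe_filter, mem_setOf_eq] at hp hq
        exact hD.2.2 hp.1 hq.1 hpq) (e2.trans_lt hs)
    rw [e1] at this
    linarith

theorem ACStar.insert {a b : ℝ} {F : ℝ → ℝ} {K : Set ℝ} (hFc : ContinuousOn F (Icc a b))
    (hF : ACStar a b F K) (e : ℝ) : ACStar a b F (insert e K) := by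
  rw [ACStar.iff'] at hF ⊢
  intro ε hε
  obtain ⟨δ, hδ, H⟩ := hF (ε / 3) (by positivity)
  obtain ⟨δ', hδ', H'⟩ := exists_osc_lt hFc (show 0 < ε / 3 by positivity)
  refine ⟨min δ δ', lt_min hδ hδ', fun D h1 h2 h3 => ?_⟩
  have hpos : ∀ p ∈ D, 0 ≤ p.2 - p.1 := fun p hp => by linarith [(h1 p hp).1]
  have hsub : ∀ E ⊆ D, ∑ p ∈ E, (p.2 - p.1) < min δ δ' := fun E hE =>
    (Finset.sum_le_sum_of_subset_of_nonneg hE fun p hp _ => hpos p hp).trans_lt h3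
  have hsmall : ∀ p ∈ D, osc F (Icc p.1 p.2) ≤ ε / 3 := fun p hp => by
    have := hsub {p} (by simpa using hp)
    rw [Finset.sum_singleton] at this
    exact H' _ _ (h1 p hp).1.le (h1 p hp).2.2.2 (this.trans_le (min_le_right _ _))
  have hcard : ∀ (g : ℝ × ℝ → ℝ), (∀ p ∈ D, ∀ q ∈ D, g p = e → g q = e → p = q) →
      ∑ p ∈ D with g p = e, osc F (Icc p.1 p.2) ≤ ε / 3 := by
    intro g hg
    have hc : (D.filter fun p => g p = e).card ≤ 1 := by
      rw [Finset.card_le_one]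
      intro p hp q hq
      simp only [Finset.mem_filter] at hp hq
      exact hg p hp.1 q hq.1 hp.2 hq.2
    calc _ ≤ (D.filter fun p => g p = e).card • (ε / 3) := by
            apply Finset.sum_le_card_nsmul
            intro p hp
            exact hsmall p (Finset.mem_filter.1 hp).1
      _ ≤ 1 • (ε / 3) := by
            apply nsmul_le_nsmul_left (by positivity) hc
      _ = _ := one_nsmul _
  have c1 := hcard Prod.fst (fun p hp q hq e1 e2 => by
    by_contra hne
    have := (h1 p hp).1
    have := (h1 q hq).1
    rcases h2 hp hq hne with h | h <;> linarith)
  have c2 := hcard Prod.snd (fun p hp q hq e1 e2 => by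
    by_contra hne
    have := (h1 p hp).1
    have := (h1 q hq).1
    rcases h2 hp hq hne with h | h <;> linarith)
  have c3 := H (D.filter fun p => p.1 ≠ e ∧ p.2 ≠ e) (fun p hp => by
      rw [Finset.mem_filter] at hp
      obtain ⟨q1, q2, q3, q4⟩ := h1 p hp.1
      exact ⟨q1, q2.resolve_left hp.2.1, q3.resolve_left hp.2.2, q4⟩) (fun p hp q hq hpq => by
        simp only [Finset.coe_filter, mem_setOf_eq] at hp hq
        exact h2 hp.1 hq.1 hpq)
      ((hsub _ (Finset.filter_subset _ _)).trans_le (min_le_left _ _))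
  have : ∑ p ∈ D, osc F (Icc p.1 p.2) ≤ ∑ p ∈ D with p.1 = e, osc F (Icc p.1 p.2) +
      (∑ p ∈ D with p.2 = e, osc F (Icc p.1 p.2) +
       ∑ p ∈ D with (p.1 ≠ e ∧ p.2 ≠ e), osc F (Icc p.1 p.2)) := by
    rw [Finset.sum_filter, Finset.sum_filter, Finset.sum_filter, ← Finset.sum_add_distrib,
      ← Finset.sum_add_distrib]
    refine Finset.sum_le_sum fun p hp => ?_
    have := osc_nonneg F (Icc p.1 p.2)
    by_cases k1 : p.1 = e <;> by_cases k2 : p.2 = e <;> simp [k1, k2] <;> simp_all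
  linarith

theorem open_eq_Ioo {A : Set ℝ} (ho : IsOpen A) (hp : IsPreconnected A) {a b : ℝ}
    (hb : A ⊆ Icc a b) : A = Ioo (sInf A) (sSup A) ∧ sInf A ≤ sSup A := by
  rcases A.eq_empty_or_nonempty with rfl | hne
  · simp
  have h1 : BddBelow A := ⟨a, fun x hx => (hb hx).1⟩
  have h2 : BddAbove A := ⟨b, fun x hx => (hb hx).2⟩
  refine ⟨?_, csInf_le_csSup hne h1 h2⟩
  apply Subset.antisymm
  · intro x hx
    obtain ⟨r, hr, hball⟩ := Metric.isOpen_iff.1 ho x hx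
    rw [Real.ball_eq_Ioo] at hball
    constructor
    · refine lt_of_le_of_lt (csInf_le h1 (hball (show x - r / 2 ∈ _ by constructor <;> linarith))) ?_
      linarith
    · refine lt_of_lt_of_le ?_ (le_csSup h2 (hball (show x + r / 2 ∈ _ by constructor <;> linarith)))
      linarith
  · exact IsConnected.Ioo_csInf_csSup_subset ⟨hne, hp⟩ h1 h2

theorem open_components {a b : ℝ} {U : Set ℝ} (hU : IsOpen U) (hUb : U ⊆ Icc a b) :
    ∃ c d : ℕ → ℝ, (∀ n, c n ≤ d n) ∧
      (Pairwise fun m n => Disjoint (Ioo (c m) (d m)) (Ioo (c n) (d n))) ∧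
      (⋃ n, Ioo (c n) (d n)) = U := by
  set S : Set (Set ℝ) := connectedComponentIn U '' U with hS
  have hdisj : ∀ A ∈ S, ∀ B ∈ S, ∀ z, z ∈ A → z ∈ B → A = B := by
    rintro _ ⟨x, hx, rfl⟩ _ ⟨y, hy, rfl⟩ z h1 h2
    rw [connectedComponentIn_eq h1, connectedComponentIn_eq h2]
  have hopen : ∀ A ∈ S, IsOpen A := by
    rintro _ ⟨x, hx, rfl⟩
    exact hU.connectedComponentIn
  have hcount : S.Countable := by
    apply Set.PairwiseDisjoint.countable_of_isOpen (s := id)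
    · intro A hA B hB hne
      rw [Function.onFun, Set.disjoint_left]
      intro z h1 h2
      exact hne (hdisj A hA B hB z h1 h2)
    · exact hopen
    · rintro _ ⟨x, hx, rfl⟩
      exact ⟨x, mem_connectedComponentIn hx⟩
  obtain ⟨g, hg⟩ := Set.countable_iff_exists_injOn.1 hcount
  set T : ℕ → Set ℝ := fun n => {z | ∃ A ∈ S, g A = n ∧ z ∈ A} with hT
  have hTA : ∀ n, T n = ∅ ∨ T n ∈ S := by
    intro n
    by_cases h : ∃ A ∈ S, g A = n
    · obtain ⟨A, hA, hgA⟩ := h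
      right
      have : T n = A := by
        ext z
        constructor
        · rintro ⟨B, hB, hgB, hz⟩
          rwa [hg hA hB (hgA.trans hgB.symm)]
        · intro hz
          exact ⟨A, hA, hgA, hz⟩
      rwa [this]
    · left
      ext z
      simp only [mem_empty_iff_false, iff_false]
      rintro ⟨B, hB, hgB, hz⟩
      exact h ⟨B, hB, hgB⟩
  have hTU : ∀ n, T n ⊆ U := by
    intro n
    rcases hTA n with h | ⟨x, hx, h⟩
    · rw [h]; exact empty_subset _
    · rw [← h]; exact connectedComponentIn_subset _ _
  have key : ∀ n, T n = Ioo (sInf (T n)) (sSup (T n)) ∧ sInf (T n) ≤ sSup (T n) := by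
    intro n
    apply open_eq_Ioo (a := a) (b := b)
    · rcases hTA n with h | h
      · rw [h]; exact isOpen_empty
      · exact hopen _ h
    · rcases hTA n with h | ⟨x, hx, h⟩
      · rw [h]; exact isPreconnected_empty
      · rw [← h]; exact isPreconnected_connectedComponentIn
    · exact (hTU n).trans hUb
  refine ⟨fun n => sInf (T n), fun n => sSup (T n), fun n => (key n).2, ?_, ?_⟩
  · intro m n hmn
    show Disjoint (Ioo (sInf (T m)) (sSup (T m))) (Ioo (sInf (T n)) (sSup (T n)))
    rw [← (key m).1, ← (key n).1, Set.disjoint_left]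
    rintro z ⟨A, hA, hgA, hz⟩ ⟨B, hB, hgB, hz'⟩
    have := hdisj A hA B hB z hz hz'
    subst this
    exact hmn (hgA.symm.trans hgB)
  · have : (⋃ n, Ioo (sInf (T n)) (sSup (T n))) = ⋃ n, T n :=
      iUnion_congr fun n => (key n).1.symm
    rw [this]
    apply Subset.antisymm
    · exact iUnion_subset hTU
    · intro z hz
      exact mem_iUnion.2 ⟨g (connectedComponentIn U z), _, ⟨z, hz, rfl⟩, rfl,
        mem_connectedComponentIn hz⟩

open scoped ENNReal in
theorem volume_image_le_pair {F : ℝ → ℝ} {A : Set ℝ} (hb : Bornology.IsBounded (F '' A)) :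
    ∃ x y, (x < y → x ∈ A ∧ y ∈ A) ∧ x ≤ y ∧
      volume (F '' A) ≤ 2 * ENNReal.ofReal |F x - F y| := by
  by_cases h0 : Metric.ediam (F '' A) = 0
  · refine ⟨0, 0, fun h => absurd h (lt_irrefl _), le_rfl, ?_⟩
    exact (Real.volume_le_diam _).trans (by rw [h0]; exact zero_le)
  have hlt : Metric.ediam (F '' A) / 2 < Metric.ediam (F '' A) :=
    ENNReal.half_lt_self h0 (hb.ediam_ne_top)
  have := mt Metric.ediam_le_iff.2 (not_le.2 hlt)
  push Not at this
  obtain ⟨_, ⟨x, hx, rfl⟩, _, ⟨y, hy, rfl⟩, hxy⟩ := this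
  have h2 : volume (F '' A) ≤ 2 * ENNReal.ofReal |F x - F y| := by
    refine (Real.volume_le_diam _).trans ?_
    rw [edist_dist, Real.dist_eq] at hxy
    rw [mul_comm]
    exact ENNReal.div_le_iff_le_mul (by simp) (by simp) |>.1 hxy.le
  rcases le_total x y with h | h
  · exact ⟨x, y, fun _ => ⟨hx, hy⟩, h, h2⟩
  · exact ⟨y, x, fun _ => ⟨hy, hx⟩, h, by rwa [abs_sub_comm]⟩

open scoped ENNReal in
theorem ACStar.image_null {a b : ℝ} {F : ℝ → ℝ} {K E : Set ℝ} (hFc : ContinuousOn F (Icc a b))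
    (hF : ACStar a b F K) (hEK : E ⊆ K) (hE : E ⊆ Icc a b) (h0 : volume E = 0) :
    volume (F '' E) = 0 := by
  have key : ∀ ε > (0:ℝ), volume (F '' E) ≤ 2 * ENNReal.ofReal ε := by
    intro ε hε
    obtain ⟨δ, hδ, H⟩ := ACStar.iff'.1 hF ε hε
    obtain ⟨U, hEU, hUo, hUv⟩ := Set.exists_isOpen_lt_of_lt E (ENNReal.ofReal δ)
      (by rw [h0]; exact ENNReal.ofReal_pos.2 hδ)
    obtain ⟨c, d, hcd, hdis, hun⟩ := open_components (U := U ∩ Ioo (a - 1) (b + 1))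
      (hUo.inter isOpen_Ioo) (inter_subset_right.trans Ioo_subset_Icc_self)
    have hbd : ∀ A ⊆ E, Bornology.IsBounded (F '' A) := fun A hA =>
      (isCompact_Icc.image_of_continuousOn hFc).isBounded.subset (image_mono (hA.trans hE))
    choose x y hxy hle hvol using fun n => volume_image_le_pair
      (hbd (E ∩ Ioo (c n) (d n)) inter_subset_left)
    have h1 : F '' E ⊆ ⋃ n, F '' (E ∩ Ioo (c n) (d n)) := by
      rintro _ ⟨z, hz, rfl⟩
      have : z ∈ ⋃ n, Ioo (c n) (d n) := by
        rw [hun]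
        exact ⟨hEU hz, by linarith [(hE hz).1], by linarith [(hE hz).2]⟩
      obtain ⟨n, hn⟩ := mem_iUnion.1 this
      exact mem_iUnion.2 ⟨n, z, ⟨hz, hn⟩, rfl⟩
    calc volume (F '' E) ≤ ∑' n, volume (F '' (E ∩ Ioo (c n) (d n))) :=
          (measure_mono h1).trans (measure_iUnion_le _)
      _ ≤ ∑' n, 2 * ENNReal.ofReal |F (x n) - F (y n)| := ENNReal.tsum_le_tsum hvol
      _ = 2 * ∑' n, ENNReal.ofReal |F (x n) - F (y n)| := ENNReal.tsum_mul_left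
      _ ≤ 2 * ENNReal.ofReal ε := by
          gcongr
          rw [ENNReal.tsum_eq_iSup_sum]
          apply iSup_le
          intro t
          rw [← ENNReal.ofReal_sum_of_nonneg fun _ _ => abs_nonneg _]
          apply ENNReal.ofReal_le_ofReal
          set t' := t.filter fun n => x n < y n with ht'
          have hsum : ∑ n ∈ t, |F (x n) - F (y n)| = ∑ n ∈ t', |F (x n) - F (y n)| := by
            symm
            apply Finset.sum_filter_of_ne
            intro n hn hne
            rcases (hle n).eq_or_lt with h | h
            · rw [h] at hne; simp at hne
            · exact h
          have hlt : ∀ n ∈ t', x n < y n := fun n hn => (Finset.mem_filter.1 hn).2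
          have hmem : ∀ n ∈ t', (x n ∈ E ∧ x n ∈ Ioo (c n) (d n)) ∧ y n ∈ E ∧ y n ∈ Ioo (c n) (d n) :=
            fun n hn => hxy n (hlt n hn)
          have hord : ∀ m ∈ t', ∀ n ∈ t', m ≠ n → y m ≤ x n ∨ y n ≤ x m := by
            intro m hm n hn hmn
            by_contra! hcon
            have hd := Set.disjoint_left.1 (hdis hmn)
            have p1 := (hmem m hm).1.2
            have p2 := (hmem m hm).2.2
            have p3 := (hmem n hn).1.2
            have p4 := (hmem n hn).2.2
            have l1 := hlt m hm
            have l2 := hlt n hn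
            rcases le_total (x m) (x n) with h | h
            · exact hd (a := x n) ⟨by linarith [p1.1], by linarith [p2.2]⟩ p3
            · exact hd (a := x m) p1 ⟨by linarith [p3.1], by linarith [p4.2]⟩
          have hinj : Set.InjOn (fun n => (x n, y n)) (t' : Set ℕ) := by
            intro m hm n hn hmn
            by_contra hne
            simp only [Prod.mk.injEq] at hmn
            have l1 := hlt m hm
            rcases hord m hm n hn hne with h | h <;> linarith [hmn.1, hmn.2]
          have hIcc : ∀ n ∈ t', Icc (x n) (y n) ⊆ Icc a b := fun n hn =>
            Icc_subset_Icc (hE (hmem n hn).1.1).1 (hE (hmem n hn).2.1).2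
          have := H (t'.image fun n => (x n, y n)) (fun p hp => by
              obtain ⟨n, hn, rfl⟩ := Finset.mem_image.1 hp
              exact ⟨hlt n hn, hEK (hmem n hn).1.1, hEK (hmem n hn).2.1, hIcc n hn⟩)
            (fun p hp q hq hpq => by
              obtain ⟨n, hn, rfl⟩ := Finset.mem_image.1 (Finset.mem_coe.1 hp)
              obtain ⟨m, hm, rfl⟩ := Finset.mem_image.1 (Finset.mem_coe.1 hq)
              exact hord n hn m hm (fun h => hpq (by rw [h])))
            (by
              rw [Finset.sum_image hinj]
              have e1 : ENNReal.ofReal (∑ n ∈ t', (y n - x n)) < ENNReal.ofReal δ := by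
                rw [ENNReal.ofReal_sum_of_nonneg fun n hn => by linarith [hlt n hn]]
                calc ∑ n ∈ t', ENNReal.ofReal (y n - x n)
                    ≤ ∑ n ∈ t', volume (Ioo (c n) (d n)) := by
                      refine Finset.sum_le_sum fun n hn => ?_
                      rw [Real.volume_Ioo]
                      apply ENNReal.ofReal_le_ofReal
                      linarith [(hmem n hn).1.2.1, (hmem n hn).2.2.2]
                  _ = volume (⋃ n ∈ t', Ioo (c n) (d n)) :=
                      (measure_biUnion_finset (fun m _ n _ h => hdis h)
                        fun _ _ => measurableSet_Ioo).symm
                  _ ≤ volume U := by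
                      apply measure_mono
                      refine iUnion₂_subset fun n _ => ?_
                      exact (subset_iUnion (fun n => Ioo (c n) (d n)) n).trans
                        (hun.subset.trans inter_subset_left)
                  _ < _ := hUv
              exact (ENNReal.ofReal_lt_ofReal_iff hδ).1 e1)
          rw [Finset.sum_image hinj] at this
          rw [hsum]
          refine le_trans (Finset.sum_le_sum fun n hn => ?_) this
          exact le_osc hFc (hIcc n hn) (left_mem_Icc.2 (hle n)) (right_mem_Icc.2 (hle n))
  by_contra hne
  have hpos : 0 < volume (F '' E) := pos_iff_ne_zero.2 hne
  have hfin : volume (F '' E) ≠ ∞ := ((key 1 one_pos).trans_lt (by simp [ENNReal.mul_lt_top])).ne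
  have := key ((volume (F '' E)).toReal / 4) (by
    have := ENNReal.toReal_pos hne hfin
    positivity)
  have h3 := ENNReal.toReal_mono (by simp [ENNReal.mul_eq_top]) this
  rw [ENNReal.toReal_mul, ENNReal.toReal_ofReal (by positivity)] at h3
  have := ENNReal.toReal_pos hne hfin
  norm_num at h3
  linarith

theorem ACGStar.eq_const {a b : ℝ} {G : ℝ → ℝ} (hG : ContinuousOn G (Icc a b))
    (hA : ACGStar a b G (Icc a b))
    (hd : ∀ᵐ x ∂(volume.restrict (Icc a b)), HasDerivAt G 0 x) :
    ∀ x ∈ Icc a b, G x = G a := by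
  obtain ⟨C, hC, hCU⟩ := hA
  set N : Set ℝ := {x ∈ Icc a b | ¬ HasDerivAt G 0 x} with hN
  have hN0 : volume N = 0 := by
    rw [ae_restrict_iff' measurableSet_Icc, ae_iff] at hd
    convert hd using 2
    ext x
    simp [hN, and_assoc]
  have h1 : volume (G '' (Icc a b \ N)) = 0 := by
    apply addHaar_image_eq_zero_of_det_fderivWithin_eq_zero volume (f' := fun _ => 0)
    · intro x hx
      have : HasDerivAt G 0 x := by
        by_contra h
        exact hx.2 ⟨hx.1, h⟩
      have := this.hasFDerivAt.hasFDerivWithinAt (s := Icc a b \ N)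
      have e : (ContinuousLinearMap.toSpanSingleton ℝ (0:ℝ)) = 0 := by ext; simp
      rw [e] at this
      exact this
    · intro x hx
      simp [ContinuousLinearMap.det]
  have h2 : ∀ n, volume (G '' (N ∩ C n)) = 0 := fun n =>
    (hC n).2.2.image_null hG inter_subset_right (fun x hx => hx.1.1)
      (measure_mono_null inter_subset_left hN0)
  have h3 : volume (G '' (Icc a b)) = 0 := by
    refine measure_mono_null (t := G '' (Icc a b \ N) ∪ ⋃ n, G '' (N ∩ C n)) ?_
      (measure_union_null h1 (measure_iUnion_null h2))
    rintro _ ⟨x, hx, rfl⟩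
    by_cases hxN : x ∈ N
    · right
      have : x ∈ ⋃ n, C n := hCU ▸ hx
      obtain ⟨n, hn⟩ := mem_iUnion.1 this
      exact mem_iUnion.2 ⟨n, x, ⟨hxN, hn⟩, rfl⟩
    · left
      exact ⟨x, ⟨hx, hxN⟩, rfl⟩
  intro x hx
  by_contra hne
  have h4 : uIcc (G a) (G x) ⊆ G '' (Icc a b) := by
    have := intermediate_value_uIcc (a := a) (b := x) (f := G)
      (hG.mono (by rw [uIcc_of_le hx.1]; exact Icc_subset_Icc le_rfl hx.2))
    refine this.trans (image_mono ?_)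
    rw [uIcc_of_le hx.1]; exact Icc_subset_Icc le_rfl hx.2
  have h5 := measure_mono_null h4 h3
  rw [uIcc, Real.volume_Icc, ENNReal.ofReal_eq_zero] at h5
  have : G a ⊓ G x < G a ⊔ G x := by
    rw [inf_lt_sup]; exact fun h => hne h.symm
  linarith

theorem ae_ne (c : ℝ) (μ : Measure ℝ) [NullSingletonClass μ] : ∀ᵐ x ∂μ, x ≠ c := by
  simp [ae_iff, measure_singleton]

theorem HasDenjoyIntegralFn.congr {a b : ℝ} {f F G : ℝ → ℝ} (h : HasDenjoyIntegralFn a b f F)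
    (hab : a ≤ b) (hFG : ∀ x ∈ Icc a b, F x = G x) : HasDenjoyIntegralFn a b f G := by
  obtain ⟨h1, h2, ⟨C, hC, hCU⟩, h4⟩ := h
  refine ⟨h1.congr fun x hx => (hFG x hx).symm, by rw [← hFG a ⟨le_rfl, hab⟩, h2],
    ⟨C, fun n => ⟨(hC n).1, (hC n).2.1, ?_⟩, hCU⟩, ?_⟩
  · refine (hC n).2.2.transfer Subset.rfl fun u hu v hv huv hs => ⟨hs, ?_⟩
    refine (osc_congr fun x hx y hy => ?_).le
    rw [hFG x (hs hx), hFG y (hs hy)]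
  · have m : ∀ᵐ x ∂(volume.restrict (Icc a b)), x ∈ Icc a b := ae_restrict_mem measurableSet_Icc
    filter_upwards [h4, m, ae_restrict_of_ae (ae_ne a volume), ae_restrict_of_ae (ae_ne b volume)]
      with x hx hm ha hb
    refine hx.congr_of_eventuallyEq ?_
    filter_upwards [Ioo_mem_nhds (lt_of_le_of_ne hm.1 ha.symm) (lt_of_le_of_ne hm.2 hb)] with y hy
    exact (hFG y (Ioo_subset_Icc_self hy)).symm

theorem HasDenjoyIntegralFn.unique {a b : ℝ} {f F G : ℝ → ℝ} (h : HasDenjoyIntegralFn a b f F)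
    (h' : HasDenjoyIntegralFn a b f G) : ∀ x ∈ Icc a b, F x = G x := by
  obtain ⟨h1, h2, ⟨C, hC, hCU⟩, h4⟩ := h
  obtain ⟨k1, k2, ⟨E, hE, hEU⟩, k4⟩ := h'
  have := ACGStar.eq_const (G := fun x => F x - G x) (h1.sub k1) (by
    refine ⟨fun n => C n.unpair.1 ∩ E n.unpair.2, fun n => ⟨(hC _).1.inter (hE _).1,
      inter_subset_left.trans (hC _).2.1, ?_⟩, ?_⟩
    · exact ACStar.sub h1 k1 ((hC _).2.2.mono inter_subset_left)
        ((hE _).2.2.mono inter_subset_right)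
    · apply Subset.antisymm
      · intro x hx
        obtain ⟨n, hn⟩ := mem_iUnion.1 (hCU ▸ hx : x ∈ ⋃ n, C n)
        obtain ⟨m, hm⟩ := mem_iUnion.1 (hEU ▸ hx : x ∈ ⋃ n, E n)
        refine mem_iUnion.2 ⟨Nat.pair n m, ?_⟩
        simp [hn, hm]
      · exact iUnion_subset fun n => inter_subset_left.trans (hC _).2.1) (by
    filter_upwards [h4, k4] with x hx hx'
    have e := hx.sub hx'
    rw [sub_self] at e
    exact e)
  intro x hx
  have := this x hx
  linarith

theorem HasDenjoyIntegralFn.restrict {a b c d : ℝ} {f F : ℝ → ℝ}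
    (h : HasDenjoyIntegralFn a b f F) (hac : a ≤ c) (hdb : d ≤ b) :
    HasDenjoyIntegralFn c d f (fun x => F x - F c) := by
  obtain ⟨h1, h2, ⟨C, hC, hCU⟩, h4⟩ := h
  have hs : Icc c d ⊆ Icc a b := Icc_subset_Icc hac hdb
  refine ⟨(h1.mono hs).sub continuousOn_const, by simp, ⟨fun n => C n ∩ Icc c d, fun n =>
    ⟨(hC n).1.inter isClosed_Icc, inter_subset_right, ?_⟩, ?_⟩, ?_⟩
  · refine (hC n).2.2.transfer inter_subset_left fun u hu v hv huv hh => ⟨hh.trans hs, ?_⟩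
    exact (osc_congr fun x hx y hy => by ring).le
  · rw [← iUnion_inter, ← hCU, inter_eq_right.2 hs]
  · filter_upwards [ae_restrict_of_ae_restrict_of_subset hs h4] with x hx
    exact hx.sub_const _

theorem HasDenjoyIntegralFn.denjoyIntegral_eq {a b c d : ℝ} {f F : ℝ → ℝ}
    (h : HasDenjoyIntegralFn a b f F) (hac : a ≤ c) (hcd : c ≤ d) (hdb : d ≤ b) :
    denjoyIntegral c d f = F d - F c := by
  have h1 := h.restrict hac hdb
  have h2 : DenjoyIntegrable c d f := ⟨_, h1⟩
  rw [denjoyIntegral, dif_pos h2]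
  exact (Classical.choose_spec h2).unique h1 d ⟨hcd, le_rfl⟩

/-- the primitive of `f` cut off to `[c,d]` -/
def clampFn (F : ℝ → ℝ) (c d : ℝ) (x : ℝ) : ℝ := F (max c (min x d)) - F c

theorem clampFn_eq {F : ℝ → ℝ} {c d x : ℝ} (hx : x ∈ Icc c d) : clampFn F c d x = F x - F c := by
  rw [clampFn, min_eq_left hx.2, max_eq_right hx.1]

theorem clampFn_left {F : ℝ → ℝ} {c d x : ℝ} (hcd : c ≤ d) (hx : x ≤ c) :
    clampFn F c d x = F c - F c := by
  rw [clampFn, min_eq_left (hx.trans hcd), max_eq_left hx]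

theorem clampFn_right {F : ℝ → ℝ} {c d x : ℝ} (hcd : c ≤ d) (hx : d ≤ x) :
    clampFn F c d x = F d - F c := by
  rw [clampFn, min_eq_right hx, max_eq_right hcd]

theorem clampFn_ACStar {a b a' b' c d : ℝ} {F : ℝ → ℝ} {K : Set ℝ} (hK : K ⊆ Icc c d)
    (hac : a ≤ c) (hdb : d ≤ b)
    (hF : ACStar a b F K) : ACStar a' b' (clampFn F c d) K := by
  refine hF.transfer Subset.rfl fun u hu v hv huv hs => ⟨?_, ?_⟩
  · exact Icc_subset_Icc (hac.trans (hK hu).1) ((hK hv).2.trans hdb)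
  · refine (osc_congr fun x hx y hy => ?_).le
    have := hK hu
    have := hK hv
    rw [clampFn_eq ⟨(hK hu).1.trans hx.1, hx.2.trans (hK hv).2⟩,
      clampFn_eq ⟨(hK hu).1.trans hy.1, hy.2.trans (hK hv).2⟩]
    ring

theorem HasDenjoyIntegralFn.clamp {a b c d : ℝ} {f F : ℝ → ℝ}
    (h : HasDenjoyIntegralFn a b f F) (hac : a ≤ c) (hcd : c ≤ d) (hdb : d ≤ b) :
    HasDenjoyIntegralFn a b ((Ioo c d).indicator f) (clampFn F c d) := by
  obtain ⟨h1, h2, ⟨C, hC, hCU⟩, h4⟩ := h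
  have hs : Icc c d ⊆ Icc a b := Icc_subset_Icc hac hdb
  refine ⟨?_, ?_, ⟨fun n => match n with
    | 0 => Icc a c
    | 1 => Icc d b
    | n + 2 => C n ∩ Icc c d, ?_, ?_⟩, ?_⟩
  · apply ContinuousOn.sub _ continuousOn_const
    apply h1.comp (by fun_prop)
    intro x hx
    exact ⟨hac.trans (le_max_left _ _), max_le (hcd.trans hdb) ((min_le_right _ _).trans hdb)⟩
  · rw [clampFn_left hcd hac, sub_self]
  · intro n
    match n with
    | 0 =>
      refine ⟨isClosed_Icc, Icc_subset_Icc le_rfl (hcd.trans hdb), ACStar.of_const ?_⟩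
      intro u hu v hv huv
      apply le_antisymm _ (osc_nonneg _ _)
      apply osc_le le_rfl
      intro x hx y hy
      rw [clampFn_left hcd (hx.2.trans hv.2), clampFn_left hcd (hy.2.trans hv.2)]
      simp
    | 1 =>
      refine ⟨isClosed_Icc, Icc_subset_Icc (hac.trans hcd) le_rfl, ACStar.of_const ?_⟩
      intro u hu v hv huv
      apply le_antisymm _ (osc_nonneg _ _)
      apply osc_le le_rfl
      intro x hx y hy
      rw [clampFn_right hcd (hu.1.trans hx.1), clampFn_right hcd (hu.1.trans hy.1)]
      simp
    | n + 2 =>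
      refine ⟨(hC n).1.inter isClosed_Icc, inter_subset_right.trans hs, ?_⟩
      exact clampFn_ACStar inter_subset_right hac hdb ((hC n).2.2.mono inter_subset_left)
  · apply Subset.antisymm
    · intro x hx
      rw [mem_iUnion]
      rcases le_total x c with h | h
      · exact ⟨0, hx.1, h⟩
      rcases le_total d x with h' | h'
      · exact ⟨1, h', hx.2⟩
      obtain ⟨n, hn⟩ := mem_iUnion.1 (hCU ▸ hx : x ∈ ⋃ n, C n)
      exact ⟨n + 2, hn, h, h'⟩
    · refine iUnion_subset fun n => ?_
      match n with
      | 0 => exact Icc_subset_Icc le_rfl (hcd.trans hdb)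
      | 1 => exact Icc_subset_Icc (hac.trans hcd) le_rfl
      | n + 2 => exact inter_subset_right.trans hs
  · filter_upwards [h4, ae_restrict_of_ae (ae_ne c volume), ae_restrict_of_ae (ae_ne d volume)]
      with x hx hc hd
    rcases lt_or_gt_of_ne hc with h | h
    · rw [indicator_of_notMem (fun h' => by linarith [h'.1])]
      refine (hasDerivAt_const x (F c - F c)).congr_of_eventuallyEq ?_
      filter_upwards [Iio_mem_nhds h] with y hy
      exact clampFn_left hcd (le_of_lt hy)
    rcases lt_or_gt_of_ne hd with h' | h'
    · rw [indicator_of_mem (show x ∈ Ioo c d from ⟨h, h'⟩)]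
      refine (hx.sub_const (F c)).congr_of_eventuallyEq ?_
      filter_upwards [Ioo_mem_nhds h h'] with y hy
      exact clampFn_eq (Ioo_subset_Icc_self hy)
    · rw [indicator_of_notMem (fun h' => by linarith [h'.2])]
      refine (hasDerivAt_const x (F d - F c)).congr_of_eventuallyEq ?_
      filter_upwards [Ioi_mem_nhds h'] with y hy
      exact clampFn_right hcd (le_of_lt hy)

open scoped Topology in
theorem bv_integrable {F f : ℝ → ℝ} {K : Set ℝ} (hK : IsCompact K) (hbv : BoundedVariationOn F K)
    (hd : ∀ᵐ x ∂(volume.restrict K), HasDerivAt F (f x) x) : IntegrableOn f K volume := by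
  rcases K.eq_empty_or_nonempty with rfl | hne
  · simp
  obtain ⟨m, hm⟩ := hK.exists_isLeast hne
  obtain ⟨M, hM⟩ := hK.exists_isGreatest hne
  obtain ⟨p, q, hp, hq, hpq⟩ := hbv.locallyBoundedVariationOn.exists_monotoneOn_sub_monotoneOn
  have ext : ∀ p : ℝ → ℝ, MonotoneOn p K → ∃ g : ℝ → ℝ, Monotone g ∧ EqOn p g K := by
    intro p hp
    apply hp.exists_monotone_extension
    · refine ⟨p m, ?_⟩
      rintro _ ⟨x, hx, rfl⟩
      exact hp hm.1 hx (hm.2 hx)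
    · refine ⟨p M, ?_⟩
      rintro _ ⟨x, hx, rfl⟩
      exact hp hx hM.1 (hM.2 hx)
  obtain ⟨g, hg, hgp⟩ := ext p hp
  obtain ⟨k, hk, hkq⟩ := ext q hq
  have hmono_int : ∀ g : ℝ → ℝ, Monotone g → IntegrableOn (deriv g) K volume := by
    intro g hg
    have := (hg.monotoneOn (uIcc m M)).intervalIntegrable_deriv
    rw [intervalIntegrable_iff_integrableOn_Icc_of_le (hm.2 hM.1)] at this
    exact this.mono_set fun x hx => ⟨hm.2 hx, hM.2 hx⟩
  refine ((hmono_int g hg).sub (hmono_int k hk)).congr ?_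
  have hcount : ∀ᵐ x ∂(volume.restrict K), x ∉ {x ∈ K | 𝓝[K ∩ Ioi x] x = ⊥} :=
    ae_restrict_of_ae ((countable_setOfPred_isolated_right_within (s := K)).ae_notMem _)
  filter_upwards [hd, hcount, ae_restrict_mem hK.measurableSet,
    ae_restrict_of_ae hg.ae_differentiableAt, ae_restrict_of_ae hk.ae_differentiableAt]
    with x hx hc hxK hgx hkx
  have hacc : UniqueDiffWithinAt ℝ K x := by
    rw [uniqueDiffWithinAt_iff_accPt, accPt_principal_iff_nhdsWithin]
    have : (𝓝[K ∩ Ioi x] x).NeBot := by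
      rw [neBot_iff]
      intro h
      exact hc ⟨hxK, h⟩
    refine this.mono (nhdsWithin_mono _ ?_)
    intro y hy
    exact ⟨hy.1, ne_of_gt hy.2⟩
  have h1 : HasDerivWithinAt F (deriv g x - deriv k x) K x := by
    refine ((hgx.hasDerivAt.sub hkx.hasDerivAt).hasDerivWithinAt (s := K)).congr ?_ ?_
    · intro y hy
      rw [hpq]
      simp [hgp hy, hkq hy]
    · rw [hpq]
      simp [hgp hxK, hkq hxK]
  exact hacc.eq_deriv _ h1 hx.hasDerivWithinAt

theorem ACStar.bv {a b : ℝ} {F : ℝ → ℝ} {K : Set ℝ} (hFc : ContinuousOn F (Icc a b))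
    (hKab : K ⊆ Icc a b) (hF : ACStar a b F K) :
    ∃ δ > 0, ∀ x y : ℝ, y - x < δ → BoundedVariationOn F (K ∩ Icc x y) := by
  obtain ⟨δ, hδ, H⟩ := ACStar.iff'.1 hF 1 one_pos
  refine ⟨δ, hδ, fun x y hxy => ?_⟩
  suffices h : eVariationOn F (K ∩ Icc x y) ≤ 1 from ne_top_of_le_ne_top (by simp) h
  refine iSup_le ?_
  rintro ⟨n, u, hu, huK⟩
  simp only [edist_dist]
  rw [← ENNReal.ofReal_sum_of_nonneg fun _ _ => dist_nonneg]
  rw [← ENNReal.ofReal_one]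
  apply ENNReal.ofReal_le_ofReal
  set t' := (Finset.range n).filter fun i => u i < u (i + 1) with ht'
  have hlt : ∀ i ∈ t', u i < u (i + 1) := fun i hi => (Finset.mem_filter.1 hi).2
  have hsum : ∑ i ∈ Finset.range n, dist (F (u (i + 1))) (F (u i)) =
      ∑ i ∈ t', dist (F (u (i + 1))) (F (u i)) := by
    symm
    apply Finset.sum_filter_of_ne
    intro i hi hne
    rcases (hu (Nat.le_succ i)).eq_or_lt with h | h
    · rw [← h] at hne; simp at hne
    · exact h
  have hord : ∀ i j, i ≠ j → u (i + 1) ≤ u j ∨ u (j + 1) ≤ u i := by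
    intro i j hij
    rcases lt_or_gt_of_ne hij with h | h
    · left; exact hu h
    · right; exact hu h
  have hinj : Set.InjOn (fun i => (u i, u (i + 1))) (t' : Set ℕ) := by
    intro i hi j hj hij
    by_contra hne
    simp only [Prod.mk.injEq] at hij
    have := hlt i hi
    rcases hord i j hne with h | h <;> linarith [hij.1, hij.2]
  have hIcc : ∀ i, Icc (u i) (u (i + 1)) ⊆ Icc a b := fun i =>
    Icc_subset_Icc (hKab (huK i).1).1 (hKab (huK _).1).2
  have := H (t'.image fun i => (u i, u (i + 1))) (fun p hp => by
      obtain ⟨i, hi, rfl⟩ := Finset.mem_image.1 hp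
      exact ⟨hlt i hi, (huK _).1, (huK _).1, hIcc i⟩)
    (fun p hp q hq hpq => by
      obtain ⟨i, hi, rfl⟩ := Finset.mem_image.1 (Finset.mem_coe.1 hp)
      obtain ⟨j, hj, rfl⟩ := Finset.mem_image.1 (Finset.mem_coe.1 hq)
      exact hord i j (fun h => hpq (by rw [h])))
    (by
      rw [Finset.sum_image hinj]
      calc ∑ i ∈ t', (u (i + 1) - u i) ≤ ∑ i ∈ Finset.range n, (u (i + 1) - u i) := by
            apply Finset.sum_le_sum_of_subset_of_nonneg (Finset.filter_subset _ _)
            intro i _ _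
            linarith [hu (Nat.le_succ i)]
        _ = u n - u 0 := Finset.sum_range_sub _ _
        _ ≤ y - x := by linarith [(huK n).2.2, (huK 0).2.1]
        _ < δ := hxy)
  rw [Finset.sum_image hinj] at this
  rw [hsum]
  refine le_trans (Finset.sum_le_sum fun i hi => ?_) this
  rw [Real.dist_eq]
  exact le_osc hFc (hIcc i) (right_mem_Icc.2 (hlt i hi).le) (left_mem_Icc.2 (hlt i hi).le)

open scoped Topology in
theorem ACStar.integrableOn {a b : ℝ} {F f : ℝ → ℝ} {K : Set ℝ} (hFc : ContinuousOn F (Icc a b))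
    (hK : IsClosed K) (hKab : K ⊆ Icc a b) (hF : ACStar a b F K)
    (hd : ∀ᵐ x ∂(volume.restrict (Icc a b)), HasDerivAt F (f x) x) : IntegrableOn f K volume := by
  obtain ⟨δ, hδ, H⟩ := hF.bv hFc hKab
  have hKc : IsCompact K := isCompact_Icc.of_isClosed_subset hK hKab
  apply LocallyIntegrableOn.integrableOn_isCompact _ hKc
  intro x hx
  refine ⟨K ∩ Icc (x - δ / 3) (x + δ / 3), ?_, ?_⟩
  · exact inter_mem self_mem_nhdsWithin
      (mem_nhdsWithin_of_mem_nhds (Icc_mem_nhds (by linarith) (by linarith)))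
  · apply bv_integrable (F := F) (hKc.inter isCompact_Icc) (H _ _ (by linarith))
    exact ae_restrict_of_ae_restrict_of_subset (inter_subset_left.trans hKab) hd

open scoped ENNReal in
theorem hasDenjoy_of_integrable {a b : ℝ} (hab : a ≤ b) {f : ℝ → ℝ}
    (hf : IntegrableOn f (Icc a b) volume) :
    HasDenjoyIntegralFn a b f (fun x => ∫ t in a..x, f t) := by
  have hii : IntervalIntegrable f volume a b :=
    (intervalIntegrable_iff_integrableOn_Icc_of_le hab).2 hf
  have hcont : ContinuousOn (fun x => ∫ t in a..x, f t) (Icc a b) := by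
    have := intervalIntegral.continuousOn_primitive_interval (μ := volume) (f := f) (a := a) (b := b)
      (by rwa [uIcc_of_le hab])
    rwa [uIcc_of_le hab] at this
  refine ⟨hcont, by simp, ⟨fun _ => Icc a b, fun _ => ⟨isClosed_Icc, Subset.rfl, ?_⟩,
    (iUnion_const _).symm⟩, ?_⟩
  · rw [ACStar.iff']
    intro ε hε
    obtain ⟨δ, hδ, H⟩ := exists_pos_setLIntegral_lt_of_measure_lt
      (μ := volume.restrict (Icc a b)) (f := fun x => ‖f x‖ₑ) hf.2.ne
      (ENNReal.ofReal_pos.2 hε).ne'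
    obtain ⟨δ', hδ', hδδ⟩ : ∃ δ' : ℝ, 0 < δ' ∧ ENNReal.ofReal δ' ≤ δ := by
      by_cases ht : δ = ∞
      · exact ⟨1, one_pos, by simp [ht]⟩
      · exact ⟨δ.toReal, ENNReal.toReal_pos hδ.ne' ht, by rw [ENNReal.ofReal_toReal ht]⟩
    refine ⟨δ', hδ', fun D h1 h2 h3 => ?_⟩
    have hosc : ∀ p ∈ D, ENNReal.ofReal (osc (fun x => ∫ t in a..x, f t) (Icc p.1 p.2)) ≤
        ∫⁻ t in Ioc p.1 p.2, ‖f t‖ₑ ∂(volume.restrict (Icc a b)) := by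
      intro p hp
      obtain ⟨q1, q2, q3, q4⟩ := h1 p hp
      have hfin : ∫⁻ t in Ioc p.1 p.2, ‖f t‖ₑ ∂(volume.restrict (Icc a b)) ≠ ∞ :=
        ((setLIntegral_le_lintegral _ _).trans_lt hf.2).ne
      rw [ENNReal.ofReal_le_iff_le_toReal hfin]
      apply osc_le ENNReal.toReal_nonneg
      intro x hx y hy
      have hsub : ∀ z ∈ Icc p.1 p.2, IntervalIntegrable f volume a z := fun z hz =>
        hii.mono_set (by
          rw [uIcc_of_le hab, uIcc_of_le (q4 hz).1]
          exact Icc_subset_Icc le_rfl (q4 hz).2)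
      rw [intervalIntegral.integral_interval_sub_left (hsub x hx) (hsub y hy)]
      have hu : Set.uIoc y x ⊆ Ioc p.1 p.2 := by
        intro t ht
        rw [Set.mem_uIoc] at ht
        rcases ht with ht | ht
        · exact ⟨hy.1.trans_lt ht.1, ht.2.trans hx.2⟩
        · exact ⟨hx.1.trans_lt ht.1, ht.2.trans hy.2⟩
      rw [← Real.norm_eq_abs, intervalIntegral.norm_intervalIntegral_eq]
      rw [← toReal_enorm]
      apply ENNReal.toReal_mono hfin
      refine (enorm_integral_le_lintegral_enorm _).trans ?_
      rw [Measure.restrict_restrict measurableSet_Ioc, inter_eq_left.2 (Ioc_subset_Icc_self.trans q4)]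
      exact lintegral_mono_set hu
    have hdisj : (D : Set (ℝ × ℝ)).PairwiseDisjoint fun p => Ioc p.1 p.2 := by
      intro p hp q hq hpq
      rw [Function.onFun, Set.disjoint_left]
      intro t ht ht'
      rcases h2 hp hq hpq with h | h
      · linarith [ht.2, ht'.1]
      · linarith [ht'.2, ht.1]
    have hm : (volume.restrict (Icc a b)) (⋃ p ∈ D, Ioc p.1 p.2) < δ := by
      calc (volume.restrict (Icc a b)) (⋃ p ∈ D, Ioc p.1 p.2)
          ≤ volume (⋃ p ∈ D, Ioc p.1 p.2) := Measure.restrict_apply_le _ _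
        _ ≤ ∑ p ∈ D, volume (Ioc p.1 p.2) := measure_biUnion_finset_le _ _
        _ = ENNReal.ofReal (∑ p ∈ D, (p.2 - p.1)) := by
            rw [ENNReal.ofReal_sum_of_nonneg fun p hp => by linarith [(h1 p hp).1]]
            simp [Real.volume_Ioc]
        _ < ENNReal.ofReal δ' := (ENNReal.ofReal_lt_ofReal_iff hδ').2 h3
        _ ≤ δ := hδδ
    have h4 := H _ hm
    rw [lintegral_biUnion_finset hdisj (fun _ _ => measurableSet_Ioc)] at h4
    have h5 : ENNReal.ofReal (∑ p ∈ D, osc (fun x => ∫ t in a..x, f t) (Icc p.1 p.2)) ≤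
        ENNReal.ofReal ε := by
      rw [ENNReal.ofReal_sum_of_nonneg fun p hp => osc_nonneg _ _]
      exact (Finset.sum_le_sum hosc).trans h4.le
    exact (ENNReal.ofReal_le_ofReal_iff hε.le).1 h5
  · rw [ae_restrict_iff' measurableSet_Icc]
    filter_upwards [hii.ae_hasDerivAt_integral] with x hx hm
    rw [uIcc_of_le hab] at hx
    exact hx hm a ⟨le_rfl, hab⟩

theorem DenLevel_eq (a b : ℝ) (α : Ordinal.{0}) : DenLevel a b α =
    if α = 0 then {f | IntegrableOn f (Icc a b) volume}
    else StepSet a b (LimSet a b (⋃ β : Iio α, DenLevel a b β.1)) := by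
  rw [DenLevel, WellFounded.fix_eq]

/-- `f` is in some countable level of the hierarchy -/
def InDen (a b : ℝ) (f : ℝ → ℝ) : Prop :=
  ∃ α : Ordinal.{0}, α.card ≤ Cardinal.aleph0 ∧ f ∈ DenLevel a b α

theorem InDen.zero (a b : ℝ) : InDen a b 0 := by
  refine ⟨0, by simp, ?_⟩
  rw [DenLevel_eq, if_pos rfl]
  exact integrableOn_zero

open scoped Ordinal in
theorem card_le_iff_lt_omega1 (α : Ordinal.{0}) : α.card ≤ Cardinal.aleph0 ↔ α < ω₁ := by
  rw [Cardinal.card_le_iff, Cardinal.succ_aleph0, Cardinal.ord_aleph]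

open scoped Ordinal in
theorem exists_countable_bound (β : ℕ → Ordinal.{0}) (h : ∀ n, (β n).card ≤ Cardinal.aleph0) :
    ∃ α : Ordinal.{0}, α.card ≤ Cardinal.aleph0 ∧ ∀ n, β n < α := by
  refine ⟨⨆ n, (β n + 1), ?_, fun n => ?_⟩
  · rw [card_le_iff_lt_omega1]
    refine Ordinal.iSup_lt_omega_one fun n => ?_
    rw [← card_le_iff_lt_omega1, Ordinal.card_add, Ordinal.card_one]
    exact Cardinal.add_le_aleph0.2 ⟨h n, Cardinal.one_le_aleph0⟩
  · exact lt_of_lt_of_le (Order.lt_add_one_iff.2 le_rfl) (Ordinal.le_iSup (fun n => β n + 1) n)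

open scoped Topology in
theorem mem_LimSet {a b : ℝ} (hab : a < b) {h H : ℝ → ℝ} {X : Set (ℝ → ℝ)}
    (hH : HasDenjoyIntegralFn a b h H) (hX : h ∈ X) (hind : (Ioo a b).indicator h = h) :
    h ∈ LimSet a b X := by
  refine ⟨fun _ => a, fun _ => b, fun _ => ⟨le_rfl, le_rfl, le_rfl, le_rfl⟩, iUnion_const _,
    fun _ _ => by rwa [hind], ⟨H b - H a, ?_⟩, ⟨H b - H a, ?_⟩⟩
  · have h1 : Tendsto (fun c => H b - H c) (𝓝[>] a) (𝓝 (H b - H a)) := by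
      apply Tendsto.sub tendsto_const_nhds
      have := hH.1 a ⟨le_rfl, hab.le⟩
      exact this.mono_left (nhdsWithin_le_iff.2 (Icc_mem_nhdsGT hab))
    refine h1.congr' ?_
    filter_upwards [Ioo_mem_nhdsGT hab] with c hc
    exact (hH.denjoyIntegral_eq hc.1.le hc.2.le le_rfl).symm
  · have h1 : Tendsto (fun c => H c - H a) (𝓝[<] b) (𝓝 (H b - H a)) := by
      apply Tendsto.sub _ tendsto_const_nhds
      have := hH.1 b ⟨hab.le, le_rfl⟩
      exact this.mono_left (nhdsWithin_le_iff.2 (Icc_mem_nhdsLT hab))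
    refine h1.congr' ?_
    filter_upwards [Ioo_mem_nhdsLT hab] with c hc
    exact (hH.denjoyIntegral_eq le_rfl hc.1.le hc.2.le).symm

theorem den_step {a b : ℝ} (hab : a < b) {g G : ℝ → ℝ} {K : Set ℝ}
    (h : HasDenjoyIntegralFn a b g G) (hK : IsClosed K) (hKab : K ⊆ Icc a b)
    (hA : ACStar a b G K)
    (hgood : ∀ c d, c < d → Ioo c d ⊆ Ioo a b \ K → InDen a b ((Ioo c d).indicator g)) :
    InDen a b g := by
  obtain ⟨c, d, hcd, hdis, hun⟩ := open_components (U := Ioo a b \ K) (isOpen_Ioo.sdiff hK)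
    (diff_subset.trans Ioo_subset_Icc_self)
  have hsub : ∀ n, Ioo (c n) (d n) ⊆ Ioo a b \ K := fun n => by
    rw [← hun]; exact subset_iUnion (fun n => Ioo (c n) (d n)) n
  have hch : ∀ n, ∃ β : Ordinal.{0}, β.card ≤ Cardinal.aleph0 ∧
      (c n < d n → (Ioo (c n) (d n)).indicator g ∈ DenLevel a b β) := by
    intro n
    by_cases hn : c n < d n
    · obtain ⟨β, h1, h2⟩ := hgood _ _ hn (hsub n)
      exact ⟨β, h1, fun _ => h2⟩
    · exact ⟨0, by simp, fun h => absurd h hn⟩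
  choose β hβ1 hβ2 using hch
  obtain ⟨α, hα, hlt⟩ := exists_countable_bound β hβ1
  refine ⟨α, hα, ?_⟩
  have hα0 : α ≠ 0 := (lt_of_le_of_lt (zero_le) (hlt 0)).ne'
  rw [DenLevel_eq, if_neg hα0]
  refine ⟨K, hK, hKab, c, d, hcd, hdis, hun, hA.integrableOn h.1 hK hKab h.2.2.2, ?_, G, h, hA⟩
  intro n hn
  have hs := (hsub n).trans diff_subset
  have hs' := (Ioo_subset_Ioo_iff hn).1 hs
  refine mem_LimSet hab (h.clamp hs'.1 hn.le hs'.2) ?_ ?_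
  · exact mem_iUnion.2 ⟨⟨β n, hlt n⟩, hβ2 n hn⟩
  · rw [indicator_indicator, inter_eq_right.2 hs]

/-- the restriction of `f` to `(c,d)` is in the hierarchy -/
def Good (a b : ℝ) (f : ℝ → ℝ) (c d : ℝ) : Prop := InDen a b ((Ioo c d).indicator f)

/-- all subintervals of `[c,d]` are good -/
def HGood (a b : ℝ) (f : ℝ → ℝ) (c d : ℝ) : Prop :=
  ∀ u v, c ≤ u → u < v → v ≤ d → Good a b f u v

theorem HGood.mono {a b c d c' d' : ℝ} {f : ℝ → ℝ} (h : HGood a b f c d) (hc : c ≤ c')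
    (hd : d' ≤ d) : HGood a b f c' d' := fun u v hu huv hv =>
  h u v (hc.trans hu) huv (hv.trans hd)

theorem good_step {a b c d : ℝ} {f F : ℝ → ℝ} {P : Set ℝ} (h : HasDenjoyIntegralFn a b f F)
    (hac : a ≤ c) (hcd : c < d) (hdb : d ≤ b) (hP : IsClosed P) (hPcd : P ⊆ Icc c d)
    (hA : ACStar a b F P)
    (hgood : ∀ c' d', c' < d' → c ≤ c' → d' ≤ d → Ioo c' d' ⊆ Ioo c d \ P → Good a b f c' d') :
    Good a b f c d := by
  have hab : a < b := hac.trans_lt (hcd.trans_le hdb)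
  have hcl := h.clamp hac hcd.le hdb
  have hs : Icc c d ⊆ Icc a b := Icc_subset_Icc hac hdb
  refine den_step (K := insert c (insert d P)) hab hcl ?_ ?_ ?_ ?_
  · rw [insert_eq, insert_eq]
    exact isClosed_singleton.union (isClosed_singleton.union hP)
  · intro x hx
    rcases hx with rfl | rfl | hx
    · exact hs ⟨le_rfl, hcd.le⟩
    · exact hs ⟨hcd.le, le_rfl⟩
    · exact hs (hPcd hx)
  · exact ((clampFn_ACStar hPcd hac hdb hA).insert hcl.1 d).insert hcl.1 c
  · intro c' d' hlt hsub
    have hc : ¬ (c' < c ∧ c < d') := fun hh => (hsub hh).2 (by simp)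
    have hd : ¬ (c' < d ∧ d < d') := fun hh => (hsub hh).2 (by simp)
    rw [indicator_indicator]
    by_cases h1 : d' ≤ c
    · have : Ioo c' d' ∩ Ioo c d = ∅ := by
        ext x
        simp only [mem_inter_iff, mem_Ioo, mem_empty_iff_false, iff_false]
        rintro ⟨q1, q2⟩
        linarith
      rw [this, indicator_empty]
      exact InDen.zero a b
    by_cases h2 : d ≤ c'
    · have : Ioo c' d' ∩ Ioo c d = ∅ := by
        ext x
        simp only [mem_inter_iff, mem_Ioo, mem_empty_iff_false, iff_false]
        rintro ⟨q1, q2⟩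
        linarith
      rw [this, indicator_empty]
      exact InDen.zero a b
    push Not at h1 h2
    have h3 : c ≤ c' := by
      by_contra! h3
      exact hc ⟨h3, h1⟩
    have h4 : d' ≤ d := by
      by_contra! h4
      exact hd ⟨h2, h4⟩
    have h5 : Ioo c' d' ⊆ Ioo c d := Ioo_subset_Ioo h3 h4
    rw [inter_eq_left.2 h5]
    refine hgood c' d' hlt h3 h4 fun x hx => ⟨h5 hx, fun hxP => (hsub hx).2 (by simp [hxP])⟩

theorem HGood.union {a b c m d : ℝ} {f F : ℝ → ℝ} (h : HasDenjoyIntegralFn a b f F)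
    (hac : a ≤ c) (hdb : d ≤ b) (h1 : HGood a b f c m) (h2 : HGood a b f m d) :
    HGood a b f c d := by
  intro u v hu huv hv
  by_cases hm : u < m ∧ m < v
  · refine good_step (P := {m}) h (hac.trans hu) huv (hv.trans hdb) isClosed_singleton
      (by simpa using ⟨hm.1.le, hm.2.le⟩) ?_ ?_
    · apply ACStar.of_const
      rintro x hx y hy -
      rw [mem_singleton_iff] at hx hy
      rw [hx, hy]
      exact osc_self _ _
    · intro c' d' hlt hc hd hsub
      rcases le_or_gt d' m with k | k
      · exact h1 c' d' (hu.trans hc) hlt k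
      rcases le_or_gt m c' with k' | k'
      · exact h2 c' d' k' hlt (hd.trans hv)
      · exact absurd rfl (hsub ⟨k', k⟩).2
  · rcases le_or_gt v m with k | k
    · exact h1 u v hu huv k
    · refine h2 u v ?_ huv hv
      by_contra! k'
      exact hm ⟨k', k⟩

theorem exists_pos_le_finset (s : Finset ℕ) (g : ℕ → ℝ) (hg : ∀ j, 0 < g j) :
    ∃ δ > 0, ∀ j ∈ s, δ ≤ g j := by
  induction s using Finset.induction_on with
  | empty => exact ⟨1, one_pos, by simp⟩
  | insert i s hi ih =>
    obtain ⟨δ, hδ, h⟩ := ih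
    refine ⟨min δ (g i), lt_min hδ (hg i), fun j hj => ?_⟩
    rcases Finset.mem_insert.1 hj with rfl | hj
    · exact min_le_right _ _
    · exact (min_le_left _ _).trans (h j hj)

theorem ACStar_of_seq {a b : ℝ} {F : ℝ → ℝ} {P : Set ℝ} (pr : ℝ × ℝ → ℝ) (y gap : ℕ → ℝ)
    (hpr : ∀ p q : ℝ × ℝ, p.1 < p.2 → q.1 < q.2 → (p.2 ≤ q.1 ∨ q.2 ≤ p.1) → pr p ≠ pr q)
    (hgap : ∀ j, 0 < gap j)
    (hj : ∀ p : ℝ × ℝ, p.1 < p.2 → p.1 ∈ P → p.2 ∈ P → Icc p.1 p.2 ⊆ Icc a b →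
      ∃ j, pr p = y j ∧ gap j ≤ p.2 - p.1 ∧ osc F (Icc p.1 p.2) ≤ (1 / 2 : ℝ) ^ j) :
    ACStar a b F P := by
  rw [ACStar.iff']
  intro ε hε
  obtain ⟨s, hs⟩ := summable_iff_vanishing_norm.1 summable_geometric_two ε hε
  obtain ⟨δ, hδ, hδs⟩ := exists_pos_le_finset s gap hgap
  refine ⟨δ, hδ, fun D h1 h2 h3 => ?_⟩
  have hch : ∀ p, ∃ j, p ∈ D →
      pr p = y j ∧ gap j ≤ p.2 - p.1 ∧ osc F (Icc p.1 p.2) ≤ (1 / 2 : ℝ) ^ j := by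
    intro p
    by_cases hp : p ∈ D
    · obtain ⟨j, hj⟩ := hj p (h1 p hp).1 (h1 p hp).2.1 (h1 p hp).2.2.1 (h1 p hp).2.2.2
      exact ⟨j, fun _ => hj⟩
    · exact ⟨0, fun h => absurd h hp⟩
  choose j hj' using hch
  have hinj : Set.InjOn j (D : Set (ℝ × ℝ)) := by
    intro p hp q hq hpq
    by_contra hne
    apply hpr p q (h1 p hp).1 (h1 q hq).1 (h2 hp hq hne)
    rw [(hj' p hp).1, (hj' q hq).1, hpq]
  have hdisj : Disjoint (D.image j) s := by
    rw [Finset.disjoint_left]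
    intro i hi his
    obtain ⟨p, hp, rfl⟩ := Finset.mem_image.1 hi
    have e1 := hδs _ his
    have e2 := (hj' p hp).2.1
    have e3 : p.2 - p.1 ≤ ∑ p ∈ D, (p.2 - p.1) :=
      Finset.single_le_sum (f := fun p : ℝ × ℝ => p.2 - p.1)
        (fun q hq => by linarith [(h1 q hq).1]) hp
    linarith
  have := hs _ hdisj
  rw [Finset.sum_image hinj] at this
  calc ∑ p ∈ D, osc F (Icc p.1 p.2) ≤ ∑ p ∈ D, (1 / 2 : ℝ) ^ j p :=
        Finset.sum_le_sum fun p hp => (hj' p hp).2.2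
    _ ≤ _ := Real.le_norm_self _
    _ ≤ ε := this.le

open scoped Topology in
theorem HGood.right {a b c d : ℝ} {f F : ℝ → ℝ} (h : HasDenjoyIntegralFn a b f F)
    (hac : a ≤ c) (hdb : d ≤ b) (h1 : ∀ v < d, HGood a b f c v) : HGood a b f c d := by
  intro u v hu huv hv
  rcases hv.lt_or_eq with hv | rfl
  · exact h1 v hv u v hu huv le_rfl
  obtain ⟨z, hz1, hz2, hz3⟩ := exists_seq_strictMono_tendsto' huv
  have hIab : Icc u v ⊆ Icc a b := Icc_subset_Icc (hac.trans hu) hdb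
  have hev : ∀ n : ℕ, ∀ᶠ k in atTop, osc F (Icc (z k) v) ≤ (1 / 2 : ℝ) ^ n := by
    intro n
    obtain ⟨δ, hδ, H⟩ := exists_osc_lt h.1 (show (0:ℝ) < (1 / 2) ^ n by positivity)
    filter_upwards [hz3.eventually (lt_mem_nhds (show v - δ < v by linarith))] with k hk
    exact H _ _ (hz2 k).2.le ((Icc_subset_Icc (hz2 k).1.le le_rfl).trans hIab) (by linarith)
  obtain ⟨φ, hφ, hφ2⟩ := extraction_forall_of_eventually hev
  set y := z ∘ φ with hy
  have hy1 : StrictMono y := hz1.comp hφ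
  have hy2 : ∀ n, y n ∈ Ioo u v := fun n => hz2 _
  have hy3 : Tendsto y atTop (𝓝 v) := hz3.comp hφ.tendsto_atTop
  refine good_step (P := insert v (range y)) h (hac.trans hu) huv hdb
    hy3.isCompact_insert_range.isClosed ?_ ?_ ?_
  · rintro x (rfl | ⟨n, rfl⟩)
    · exact ⟨huv.le, le_rfl⟩
    · exact Ioo_subset_Icc_self (hy2 n)
  · refine ACStar_of_seq Prod.fst y (fun j => y (j + 1) - y j) ?_ ?_ ?_
    · intro p q hp hq hpq he
      rcases hpq with k | k <;> linarith
    · intro j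
      linarith [hy1 (Nat.lt_succ_self j)]
    · rintro ⟨p, q⟩ hpq hp hq hI
      simp only at hpq hp hq hI ⊢
      have hqv : q ≤ v := by
        rcases hq with rfl | ⟨n, rfl⟩
        · exact le_rfl
        · exact (hy2 n).2.le
      rcases hp with rfl | ⟨j, rfl⟩
      · linarith
      refine ⟨j, rfl, ?_, ?_⟩
      · have : y (j + 1) ≤ q := by
          rcases hq with rfl | ⟨n, rfl⟩
          · exact (hy2 _).2.le
          · exact hy1.monotone (hy1.lt_iff_lt.1 hpq)
        linarith
      · exact (osc_mono h.1 ((Icc_subset_Icc (hy2 j).1.le le_rfl).trans hIab)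
          (Icc_subset_Icc le_rfl hqv)).trans (hφ2 j)
  · intro c' d' hlt hc hd hsub
    have hd' : d' < v := by
      rcases hd.lt_or_eq with hd | rfl
      · exact hd
      · obtain ⟨n, hn⟩ := (hy3.eventually (lt_mem_nhds hlt)).exists
        exact absurd (Or.inr ⟨n, rfl⟩) (hsub ⟨hn, (hy2 n).2⟩).2
    exact h1 d' hd' c' d' (hu.trans hc) hlt le_rfl

open scoped Topology in
theorem HGood.left {a b c d : ℝ} {f F : ℝ → ℝ} (h : HasDenjoyIntegralFn a b f F)
    (hac : a ≤ c) (hdb : d ≤ b) (h1 : ∀ v > c, HGood a b f v d) : HGood a b f c d := by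
  intro u v hu huv hv
  rcases hu.lt_or_eq with hu | rfl
  · exact h1 u hu u v le_rfl huv hv
  obtain ⟨z, hz1, hz2, hz3⟩ := exists_seq_strictAnti_tendsto' huv
  have hIab : Icc c v ⊆ Icc a b := Icc_subset_Icc hac (hv.trans hdb)
  have hev : ∀ n : ℕ, ∀ᶠ k in atTop, osc F (Icc c (z k)) ≤ (1 / 2 : ℝ) ^ n := by
    intro n
    obtain ⟨δ, hδ, H⟩ := exists_osc_lt h.1 (show (0:ℝ) < (1 / 2) ^ n by positivity)
    filter_upwards [hz3.eventually (gt_mem_nhds (show c < c + δ by linarith))] with k hk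
    exact H _ _ (hz2 k).1.le ((Icc_subset_Icc le_rfl (hz2 k).2.le).trans hIab) (by linarith)
  obtain ⟨φ, hφ, hφ2⟩ := extraction_forall_of_eventually hev
  set y := z ∘ φ with hy
  have hy1 : StrictAnti y := hz1.comp_strictMono hφ
  have hy2 : ∀ n, y n ∈ Ioo c v := fun n => hz2 _
  have hy3 : Tendsto y atTop (𝓝 c) := hz3.comp hφ.tendsto_atTop
  refine good_step (P := insert c (range y)) h hac huv (hv.trans hdb)
    hy3.isCompact_insert_range.isClosed ?_ ?_ ?_
  · rintro x (rfl | ⟨n, rfl⟩)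
    · exact ⟨le_rfl, huv.le⟩
    · exact Ioo_subset_Icc_self (hy2 n)
  · refine ACStar_of_seq Prod.snd y (fun j => y j - y (j + 1)) ?_ ?_ ?_
    · intro p q hp hq hpq he
      rcases hpq with k | k <;> linarith
    · intro j
      linarith [hy1 (Nat.lt_succ_self j)]
    · rintro ⟨p, q⟩ hpq hp hq hI
      simp only at hpq hp hq hI ⊢
      have hcp : c ≤ p := by
        rcases hp with rfl | ⟨n, rfl⟩
        · exact le_rfl
        · exact (hy2 n).1.le
      rcases hq with rfl | ⟨j, rfl⟩
      · linarith
      refine ⟨j, rfl, ?_, ?_⟩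
      · have : p ≤ y (j + 1) := by
          rcases hp with rfl | ⟨n, rfl⟩
          · exact (hy2 _).1.le
          · exact hy1.antitone (hy1.lt_iff_gt.1 hpq)
        linarith
      · exact (osc_mono h.1 ((Icc_subset_Icc le_rfl (hy2 j).2.le).trans hIab)
          (Icc_subset_Icc hcp le_rfl)).trans (hφ2 j)
  · intro c' d' hlt hc hd hsub
    have hc' : c < c' := by
      rcases hc.lt_or_eq with hc | rfl
      · exact hc
      · obtain ⟨n, hn⟩ := (hy3.eventually (gt_mem_nhds hlt)).exists
        exact absurd (Or.inr ⟨n, rfl⟩) (hsub ⟨(hy2 n).1, hn⟩).2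
    exact h1 c' hc' c' d' le_rfl hlt (hd.trans hv)

theorem HGood.inner {a b c d : ℝ} {f F : ℝ → ℝ} (h : HasDenjoyIntegralFn a b f F)
    (hac : a ≤ c) (hcd : c < d) (hdb : d ≤ b)
    (h1 : ∀ u v, c < u → v < d → HGood a b f u v) : HGood a b f c d := by
  have hm1 : c < (c + d) / 2 := by linarith
  have hm2 : (c + d) / 2 < d := by linarith
  refine HGood.union h hac hdb (m := (c + d) / 2) ?_ ?_
  · exact HGood.left h hac (by linarith) fun v hv => h1 v _ hv hm2
  · exact HGood.right h (by linarith) hdb fun v hv => h1 _ v hm1 hv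

theorem HGood.compact {a b c d : ℝ} {f F : ℝ → ℝ} (h : HasDenjoyIntegralFn a b f F)
    (hac : a ≤ c) (hdb : d ≤ b)
    (h1 : ∀ x ∈ Icc c d, ∃ r > 0, ∀ u v, a ≤ u → v ≤ b → x - r < u → u < v → v < x + r →
      Good a b f u v) : HGood a b f c d := by
  choose! r hr hgood using h1
  obtain ⟨δ, hδ, H⟩ := lebesgue_number_lemma_of_metric (s := Icc c d)
    (c := fun x : Icc c d => Metric.ball x.1 (r x)) isCompact_Icc (fun _ => Metric.isOpen_ball)
    (fun x hx => mem_iUnion.2 ⟨⟨x, hx⟩, Metric.mem_ball_self (hr x hx)⟩)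
  have key : ∀ n : ℕ, ∀ s t, c ≤ s → t ≤ d → t - s ≤ n * (δ / 2) → HGood a b f s t := by
    intro n
    induction n with
    | zero =>
      intro s t hs ht hst u v hu huv hv
      simp at hst
      linarith
    | succ n ih =>
      intro s t hs ht hst
      by_cases hsm : s ≤ t - δ / 2
      · refine HGood.union h (hac.trans hs) (ht.trans hdb) (m := t - δ / 2) ?_ ?_
        · apply ih _ _ hs (by linarith)
          push_cast at hst
          linarith
        · intro u v hu huv hv
          obtain ⟨x, hx⟩ := H u ⟨by linarith, by linarith⟩
          have e1 := hx (show u ∈ _ from Metric.mem_ball_self hδ)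
          have e2 := hx (show v ∈ _ by
            rw [Metric.mem_ball, Real.dist_eq, abs_lt]; constructor <;> linarith)
          rw [Real.ball_eq_Ioo] at e1 e2
          exact hgood x x.2 u v (by linarith) (by linarith) e1.1 huv e2.2
      · intro u v hu huv hv
        obtain ⟨x, hx⟩ := H u ⟨by linarith, by linarith⟩
        have e1 := hx (show u ∈ _ from Metric.mem_ball_self hδ)
        have e2 := hx (show v ∈ _ by
          rw [Metric.mem_ball, Real.dist_eq, abs_lt]; constructor <;> linarith)
        rw [Real.ball_eq_Ioo] at e1 e2
        exact hgood x x.2 u v (by linarith) (by linarith) e1.1 huv e2.2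
  obtain ⟨n, hn⟩ := exists_nat_ge ((d - c) / (δ / 2))
  apply key n c d le_rfl le_rfl
  rwa [div_le_iff₀ (by positivity)] at hn

theorem baire_portion {C : ℕ → Set ℝ} (hC : ∀ n, IsClosed (C n)) {P : Set ℝ} (hP : IsClosed P)
    (hne : P.Nonempty) (hsub : P ⊆ ⋃ n, C n) :
    ∃ n, ∃ x ∈ P, ∃ r > 0, P ∩ Ioo (x - r) (x + r) ⊆ C n := by
  haveI : CompleteSpace P := hP.completeSpace_coe
  haveI : Nonempty P := hne.to_subtype
  obtain ⟨n, ⟨x, hx⟩, hxi⟩ := nonempty_interior_of_iUnion_of_closed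
    (f := fun n => (Subtype.val ⁻¹' (C n) : Set P))
    (fun n => (hC n).preimage continuous_subtype_val) (by
      ext ⟨x, hx⟩
      simpa using hsub hx)
  rw [mem_interior_iff_mem_nhds, Metric.mem_nhds_iff] at hxi
  obtain ⟨r, hr, hball⟩ := hxi
  refine ⟨n, x, hx, r, hr, ?_⟩
  rintro z ⟨hz, hz'⟩
  refine hball (show (⟨z, hz⟩ : P) ∈ _ from ?_)
  rw [Metric.mem_ball, Subtype.dist_eq, Real.dist_eq, abs_lt]
  constructor <;> linarith [hz'.1, hz'.2]

theorem HasDenjoyIntegralFn.inDen {a b : ℝ} (hab : a < b) {f F : ℝ → ℝ}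
    (h : HasDenjoyIntegralFn a b f F) : InDen a b f := by
  obtain ⟨C, hC, hCU⟩ := h.2.2.1
  set Z : Set ℝ := {x ∈ Icc a b | ¬ ∃ r > 0, ∀ u v, a ≤ u → v ≤ b → x - r < u → u < v →
    v < x + r → Good a b f u v} with hZ
  have hZc : IsClosed Z := by
    rw [← isOpen_compl_iff, Metric.isOpen_iff]
    intro x hx
    by_cases hxI : x ∈ Icc a b
    · have : ∃ r > 0, ∀ u v, a ≤ u → v ≤ b → x - r < u → u < v →
          v < x + r → Good a b f u v := by
        by_contra hcon
        exact hx ⟨hxI, hcon⟩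
      obtain ⟨r, hr, H⟩ := this
      refine ⟨r / 2, half_pos hr, ?_⟩
      intro y hy hyZ
      rw [Real.ball_eq_Ioo] at hy
      refine hyZ.2 ⟨r / 2, half_pos hr, fun u v hu hv h1 h2 h3 => H u v hu hv ?_ h2 ?_⟩
      · linarith [hy.1]
      · linarith [hy.2]
    · obtain ⟨r, hr, H⟩ := Metric.isOpen_iff.1 isClosed_Icc.isOpen_compl x hxI
      exact ⟨r, hr, fun y hy hyZ => H hy hyZ.1⟩
  have hgoodpt : ∀ x ∈ Icc a b, x ∉ Z → ∃ r > 0, ∀ u v, a ≤ u → v ≤ b → x - r < u → u < v →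
      v < x + r → Good a b f u v := by
    intro x hx hxZ
    by_contra hcon
    exact hxZ ⟨hx, hcon⟩
  have hZe : Z = ∅ := by
    by_contra hne
    obtain ⟨n, x, hx, r, hr, hsub⟩ := baire_portion (fun n => (hC n).1) hZc
      (nonempty_iff_ne_empty.2 hne) (fun x hx => hCU ▸ hx.1)
    refine hx.2 ⟨r, hr, fun u v hu hv h1 h2 h3 => ?_⟩
    refine good_step (P := Z ∩ Icc u v) h hu h2 hv (hZc.inter isClosed_Icc) inter_subset_right ?_ ?_
    · refine (hC n).2.2.mono fun z hz => hsub ⟨hz.1, ?_⟩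
      exact ⟨h1.trans_le hz.2.1, hz.2.2.trans_lt h3⟩
    · intro c' d' hlt hc hd hs
      refine HGood.inner h (hu.trans hc) hlt (hd.trans hv) (fun s t hs' ht' => ?_) c' d' le_rfl hlt
        le_rfl
      refine HGood.compact h (by linarith) (by linarith) fun y hy => hgoodpt y ?_ ?_
      · exact ⟨by linarith [hy.1], by linarith [hy.2]⟩
      · intro hyZ
        exact (hs ⟨hs'.trans_le hy.1, hy.2.trans_lt ht'⟩).2
          ⟨hyZ, by linarith [hy.1], by linarith [hy.2]⟩
  have hH : HGood a b f a b := HGood.compact h le_rfl le_rfl fun x hx => hgoodpt x hx (by simp [hZe])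
  refine den_step (K := ∅) hab h isClosed_empty (empty_subset _) ?_ ?_
  · exact ACStar.of_const (by simp)
  · intro c d hcd hsub
    have := (Ioo_subset_Ioo_iff hcd).1 (hsub.trans diff_subset)
    exact hH c d this.1 hcd this.2

theorem derivIter_zero (D : Set ℝ → Set ℝ) (K : Set ℝ) : derivIter D K 0 = K :=
  Ordinal.limitRecOn_zero ..

theorem derivIter_succ (D : Set ℝ → Set ℝ) (K : Set ℝ) (α : Ordinal.{0}) :
    derivIter D K (α + 1) = D (derivIter D K α) :=
  Ordinal.limitRecOn_add_one ..

theorem derivIter_limit (D : Set ℝ → Set ℝ) (K : Set ℝ) (α : Ordinal.{0})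
    (h : Order.IsSuccLimit α) : derivIter D K α = ⋂ β : Iio α, derivIter D K β.1 :=
  Ordinal.limitRecOn_limit _ _ _ _ h

theorem derivIter_closed {D : Set ℝ → Set ℝ} (hD : ∀ K, IsClosed K → IsClosed (D K))
    {K : Set ℝ} (hK : IsClosed K) (α : Ordinal.{0}) : IsClosed (derivIter D K α) := by
  induction α using Ordinal.limitRecOn with
  | zero => rwa [derivIter_zero]
  | add_one α ih => rw [derivIter_succ]; exact hD _ ih
  | limit α hα ih =>
    rw [derivIter_limit _ _ _ hα]
    exact isClosed_iInter fun β => ih β.1 β.2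

theorem derivIter_anti {D : Set ℝ → Set ℝ} (hD : ∀ K, D K ⊆ K)
    (K : Set ℝ) {α β : Ordinal.{0}} (h : α ≤ β) : derivIter D K β ⊆ derivIter D K α := by
  induction β using Ordinal.limitRecOn with
  | zero =>
    have : α = 0 := le_antisymm h zero_le
    rw [this]
  | add_one β ih =>
    rcases h.eq_or_lt with rfl | h
    · exact le_rfl
    · rw [derivIter_succ]
      exact (hD _).trans (ih (Order.lt_add_one_iff.1 h))
  | limit β hβ ih =>
    rcases h.eq_or_lt with rfl | h
    · exact le_rfl
    · rw [derivIter_limit _ _ _ hβ]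
      exact iInter_subset (fun γ : Iio β => derivIter D K γ.1) ⟨α, h⟩

theorem derivIter_rank {D : Set ℝ → Set ℝ} {K : Set ℝ} {x : ℝ} (hx : x ∈ K) (γ : Ordinal.{0}) :
    x ∉ derivIter D K γ → ∃ β < γ, x ∈ derivIter D K β ∧ x ∉ derivIter D K (β + 1) := by
  induction γ using Ordinal.limitRecOn with
  | zero => rw [derivIter_zero]; exact fun h => absurd hx h
  | add_one γ ih =>
    intro h
    by_cases h2 : x ∈ derivIter D K γ
    · exact ⟨γ, Order.lt_add_one_iff.2 le_rfl, h2, h⟩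
    · obtain ⟨β, hβ, h3⟩ := ih h2
      exact ⟨β, hβ.trans (Order.lt_add_one_iff.2 le_rfl), h3⟩
  | limit γ hγ ih =>
    intro h
    rw [derivIter_limit _ _ _ hγ, mem_iInter, not_forall] at h
    obtain ⟨β, hβ⟩ := h
    obtain ⟨δ, hδ, h3⟩ := ih β.1 β.2 hβ
    exact ⟨δ, hδ.trans β.2, h3⟩

theorem not_countable_countable_ordinals :
    ¬ Countable {α : Ordinal.{0} // α.card ≤ Cardinal.aleph0} := by
  intro h
  haveI : Nonempty {α : Ordinal.{0} // α.card ≤ Cardinal.aleph0} := ⟨⟨0, by simp⟩⟩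
  obtain ⟨e, he⟩ := exists_surjective_nat {α : Ordinal.{0} // α.card ≤ Cardinal.aleph0}
  obtain ⟨α, hα, hlt⟩ := exists_countable_bound (fun n => (e n).1) (fun n => (e n).2)
  obtain ⟨n, hn⟩ := he ⟨α, hα⟩
  have := hlt n
  rw [hn] at this
  exact lt_irrefl _ this

theorem derivIter_stable {D : Set ℝ → Set ℝ} (hD : ∀ K, D K ⊆ K)
    (hDc : ∀ K, IsClosed K → IsClosed (D K)) {K : Set ℝ} (hK : IsClosed K) :
    ∃ α : Ordinal.{0}, α.card ≤ Cardinal.aleph0 ∧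
      derivIter D K (α + 1) = derivIter D K α := by
  by_contra hcon
  push Not at hcon
  apply not_countable_countable_ordinals
  have key : ∀ α : {α : Ordinal.{0} // α.card ≤ Cardinal.aleph0}, ∃ p : ℚ × ℚ,
      (∃ x ∈ derivIter D K α.1, (p.1 : ℝ) < x ∧ x < p.2) ∧
      (∀ x ∈ derivIter D K (α.1 + 1), ¬ ((p.1 : ℝ) < x ∧ x < p.2)) := by
    rintro ⟨α, hα⟩
    have hne := hcon α hα
    have hsub : derivIter D K (α + 1) ⊆ derivIter D K α := by
      rw [derivIter_succ]; exact hD _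
    obtain ⟨x, hx, hx2⟩ := exists_of_ssubset (hsub.ssubset_of_ne hne)
    have hcl := derivIter_closed hDc hK (α + 1)
    obtain ⟨r, hr, hball⟩ := Metric.isOpen_iff.1 hcl.isOpen_compl x hx2
    obtain ⟨p, hp1, hp2⟩ := exists_rat_btwn (show x - r < x by linarith)
    obtain ⟨q, hq1, hq2⟩ := exists_rat_btwn (show x < x + r by linarith)
    refine ⟨(p, q), ⟨x, hx, hp2, hq1⟩, ?_⟩
    rintro y hy ⟨h1, h2⟩
    refine hball ?_ hy
    rw [Real.ball_eq_Ioo]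
    exact ⟨hp1.trans h1, h2.trans hq2⟩
  choose p hp1 hp2 using key
  refine Function.Injective.countable (f := p) ?_
  have hlt : ∀ α β, p α = p β → ¬ α.1 < β.1 := by
    intro α β h hlt
    obtain ⟨x, hx, hx2⟩ := hp1 β
    rw [← h] at hx2
    exact hp2 α x (derivIter_anti hD K (Order.add_one_le_iff.2 hlt) hx) hx2
  intro α β h
  exact Subtype.ext (le_antisymm (not_lt.1 (hlt β α h.symm)) (not_lt.1 (hlt α β h)))

theorem localDeriv_closed (Q : Set ℝ → Prop) {K : Set ℝ} (hK : IsClosed K) :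
    IsClosed {x ∈ K | ∀ c d : ℝ, c < x → x < d → ¬ Q (Icc c d ∩ K)} := by
  rw [← isOpen_compl_iff, Metric.isOpen_iff]
  intro x hx
  by_cases hxK : x ∈ K
  · simp only [mem_compl_iff, mem_setOf_eq, not_and, not_forall, not_not] at hx
    obtain ⟨c, d, hc, hd, hQ⟩ := hx hxK
    obtain ⟨r, hr, hball⟩ := Metric.isOpen_iff.1 isOpen_Ioo x (⟨hc, hd⟩ : x ∈ Ioo c d)
    refine ⟨r, hr, fun y hy hy2 => ?_⟩
    exact hy2.2 c d (hball hy).1 (hball hy).2 hQ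
  · obtain ⟨r, hr, hball⟩ := Metric.isOpen_iff.1 hK.isOpen_compl x hxK
    exact ⟨r, hr, fun y hy hy2 => hball hy hy2.1⟩

theorem DF_subset (a b : ℝ) (F : ℝ → ℝ) (K : Set ℝ) : DF a b F K ⊆ K := sep_subset _ _

theorem DfF_subset (a b : ℝ) (f F : ℝ → ℝ) (K : Set ℝ) : DfF a b f F K ⊆ K :=
  union_subset (sep_subset _ _) (sep_subset _ _)

theorem DF_closed (a b : ℝ) (F : ℝ → ℝ) (K : Set ℝ) (hK : IsClosed K) :
    IsClosed (DF a b F K) := localDeriv_closed _ hK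

theorem DfF_closed (a b : ℝ) (f F : ℝ → ℝ) (K : Set ℝ) (hK : IsClosed K) :
    IsClosed (DfF a b f F K) :=
  (localDeriv_closed (fun S => IntegrableOn f S volume) hK).union (localDeriv_closed _ hK)

/-- A fixed closed set of the derivative is empty. -/
theorem derivIter_empty {a b : ℝ} {F : ℝ → ℝ} (hG : ACGStar a b F (Icc a b))
    {D : Set ℝ → Set ℝ} (hD : ∀ K, D K ⊆ K) (hDc : ∀ K, IsClosed K → IsClosed (D K))
    (hloc : ∀ K, IsClosed K → K ⊆ Icc a b → ∀ x c d, c < x → x < d →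
      ACStar a b F (Icc c d ∩ K) → x ∉ D K) :
    ∃ α : Ordinal.{0}, α.card ≤ Cardinal.aleph0 ∧ derivIter D (Icc a b) (α + 1) = ∅ := by
  obtain ⟨α, hα, hst⟩ := derivIter_stable hD hDc (isClosed_Icc (a := a) (b := b))
  refine ⟨α, hα, ?_⟩
  rw [hst]
  by_contra hne
  obtain ⟨C, hC, hCU⟩ := hG
  have hcl := derivIter_closed hDc (isClosed_Icc (a := a) (b := b)) α
  have hsub : derivIter D (Icc a b) α ⊆ Icc a b := by
    have := derivIter_anti hD (Icc a b) (zero_le (a := α))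
    rwa [derivIter_zero] at this
  obtain ⟨n, x, hx, r, hr, hP⟩ := baire_portion (fun n => (hC n).1) hcl
    (nonempty_iff_ne_empty.2 hne) (hsub.trans hCU.subset)
  refine hloc _ hcl hsub x (x - r / 2) (x + r / 2) (by linarith) (by linarith)
    (ACStar.mono ?_ (hC n).2.2) ?_
  · rintro y ⟨⟨h1, h2⟩, hy⟩
    exact hP ⟨hy, by linarith, by linarith⟩
  · rwa [← derivIter_succ D, hst]

theorem acg_of_derivIter {a b : ℝ} {F : ℝ → ℝ}
    {D : Set ℝ → Set ℝ} (hD : ∀ K, D K ⊆ K) (hDc : ∀ K, IsClosed K → IsClosed (D K))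
    (hDF : ∀ K, DF a b F K ⊆ D K)
    {α : Ordinal.{0}} (hα : α.card ≤ Cardinal.aleph0)
    (he : derivIter D (Icc a b) (α + 1) = ∅) : ACGStar a b F (Icc a b) := by
  have hcount : Countable (Iio (α + 1)) := by
    rw [← Cardinal.mk_le_aleph0_iff, Cardinal.mk_Iio_ordinal, Cardinal.lift_le_aleph0,
      Ordinal.card_add, Ordinal.card_one]
    exact Cardinal.add_le_aleph0.2 ⟨hα, Cardinal.one_le_aleph0⟩
  haveI : Nonempty (Iio (α + 1)) := ⟨⟨α, mem_Iio.2 (Order.lt_add_one_iff.2 le_rfl)⟩⟩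
  obtain ⟨e, hesurj⟩ := exists_surjective_nat (Iio (α + 1) × ℚ × ℚ)
  set E : Iio (α + 1) × ℚ × ℚ → Set ℝ := fun p =>
    Icc (p.2.1 : ℝ) p.2.2 ∩ derivIter D (Icc a b) p.1.1 with hE
  have hsub : ∀ β, derivIter D (Icc a b) β ⊆ Icc a b := by
    intro β
    have := derivIter_anti hD (Icc a b) (zero_le (a := β))
    rwa [derivIter_zero] at this
  refine ⟨fun n => if ACStar a b F (E (e n)) then E (e n) else ∅, fun n => ?_, ?_⟩
  · dsimp only
    split_ifs with h
    · exact ⟨isClosed_Icc.inter (derivIter_closed hDc isClosed_Icc _),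
        inter_subset_right.trans (hsub _), h⟩
    · exact ⟨isClosed_empty, empty_subset _, ACStar.of_const (by simp)⟩
  · apply Subset.antisymm
    · intro x hx
      obtain ⟨β, hβ, h1, h2⟩ := derivIter_rank (D := D) hx (α + 1) (by simp [he])
      rw [derivIter_succ] at h2
      have h3 : x ∉ DF a b F (derivIter D (Icc a b) β) := fun h => h2 (hDF _ h)
      simp only [DF, mem_setOf_eq, not_and, not_forall, not_not] at h3
      obtain ⟨c, d, hc, hd, hA⟩ := h3 h1
      obtain ⟨p, hp1, hp2⟩ := exists_rat_btwn hc
      obtain ⟨q, hq1, hq2⟩ := exists_rat_btwn hd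
      obtain ⟨n, hn⟩ := hesurj (⟨β, hβ⟩, p, q)
      have hAE : ACStar a b F (E (e n)) := by
        rw [hn]
        exact ACStar.mono (inter_subset_inter_left _ (Icc_subset_Icc hp1.le hq2.le)) hA
      refine mem_iUnion.2 ⟨n, ?_⟩
      rw [if_pos hAE, hn]
      exact ⟨⟨hp2.le, hq1.le⟩, h1⟩
    · refine iUnion_subset fun n => ?_
      split_ifs with h
      · exact inter_subset_right.trans (hsub _)
      · exact empty_subset _

theorem HasDenjoyIntegralFn.iff {a b : ℝ} (hab : a < b) {f F : ℝ → ℝ}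
    (hFa : F a = 0) :
    (DenjoyIntegrable a b f ∧ ∀ x ∈ Icc a b, F x = denjoyIntegral a x f) ↔
      HasDenjoyIntegralFn a b f F := by
  constructor
  · rintro ⟨⟨G, hG⟩, hF⟩
    refine hG.congr hab.le fun x hx => ?_
    rw [hF x hx, hG.denjoyIntegral_eq le_rfl hx.1 hx.2, hG.2.1, sub_zero]
  · intro h
    refine ⟨⟨F, h⟩, fun x hx => ?_⟩
    rw [h.denjoyIntegral_eq le_rfl hx.1 hx.2, hFa, sub_zero]

theorem denLevel_integrable {a b : ℝ} (hab : a < b) {f : ℝ → ℝ} {α : Ordinal.{0}}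
    (h : f ∈ DenLevel a b α) : DenjoyIntegrable a b f := by
  rw [DenLevel_eq] at h
  split_ifs at h with h0
  · exact ⟨_, hasDenjoy_of_integrable hab.le h⟩
  · obtain ⟨K, -, -, c, d, -, -, -, -, -, G, hG, -⟩ := h
    exact ⟨G, hG⟩

/-- Equivalent characterizations of Denjoy integration. -/
theorem denjoy_tfae (a b : ℝ) (hab : a < b) (f F : ℝ → ℝ) (hf : Measurable f)
    (hFc : ContinuousOn F (Icc a b)) (hFa : F a = 0) :
    List.TFAE [
      DenjoyIntegrable a b f ∧ ∀ x ∈ Icc a b, F x = denjoyIntegral a x f,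
      ∃ α : Ordinal.{0}, α.card ≤ Cardinal.aleph0 ∧ f ∈ DenLevel a b α ∧
        ∀ x ∈ Icc a b, F x = denjoyIntegral a x f,
      (∃ α : Ordinal.{0}, α.card ≤ Cardinal.aleph0 ∧
          derivIter (DfF a b f F) (Icc a b) (α + 1) = ∅) ∧
        ∀ᵐ x ∂(volume.restrict (Icc a b)), HasDerivAt F (f x) x,
      (∃ α : Ordinal.{0}, α.card ≤ Cardinal.aleph0 ∧
          derivIter (DF a b F) (Icc a b) (α + 1) = ∅) ∧
        ∀ᵐ x ∂(volume.restrict (Icc a b)), HasDerivAt F (f x) x] := by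
  have h0 := HasDenjoyIntegralFn.iff hab (f := f) hFa
  tfae_have 1 → 2 := by
    intro h
    obtain ⟨α, hα, hm⟩ := (h0.1 h).inDen hab
    exact ⟨α, hα, hm, h.2⟩
  tfae_have 2 → 1 := by
    rintro ⟨α, hα, hm, h⟩
    exact ⟨denLevel_integrable hab hm, h⟩
  tfae_have 1 → 3 := by
    intro h
    have h1 := h0.1 h
    refine ⟨?_, h1.2.2.2⟩
    refine derivIter_empty h1.2.2.1 (DfF_subset a b f F) (DfF_closed a b f F) ?_
    intro K hK hKab x c d hc hd hA hx
    rcases hx with hx | hx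
    · exact hx.2 c d hc hd (hA.integrableOn hFc (isClosed_Icc.inter hK)
        (inter_subset_right.trans hKab) h1.2.2.2)
    · exact hx.2 c d hc hd hA
  tfae_have 1 → 4 := by
    intro h
    have h1 := h0.1 h
    refine ⟨?_, h1.2.2.2⟩
    refine derivIter_empty h1.2.2.1 (DF_subset a b F) (DF_closed a b F) ?_
    intro K hK hKab x c d hc hd hA hx
    exact hx.2 c d hc hd hA
  tfae_have 3 → 1 := by
    rintro ⟨⟨α, hα, he⟩, hd⟩
    exact h0.2 ⟨hFc, hFa, acg_of_derivIter (DfF_subset a b f F) (DfF_closed a b f F)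
      (fun K => subset_union_right) hα he, hd⟩
  tfae_have 4 → 1 := by
    rintro ⟨⟨α, hα, he⟩, hd⟩
    exact h0.2 ⟨hFc, hFa, acg_of_derivIter (DF_subset a b F) (DF_closed a b F)
      (fun K => le_rfl) hα he, hd⟩
  tfae_finish
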